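/- arXiv:2409.07097 — 4 statements merged into one kernel-verified Lean document; each statement's English description precedes it below -/
import Mathlib

section
/- Let G = (V,E,w,μ,κ) be a finite connected weighted graph with nonnegative potential κ ≥ 0, and let ℓ = |E| − |V| + 1 be its cyclomatic number. Then for every integer k with ℓ + 1 ≤ k ≤ n, the (k−ℓ)-way Cheeger constant satisfies ρ_{k−ℓ}(G) ≤ √(2 τ_G λ_k(G)). -/
open BigOperators Matrix Polynomial

/-- Conductance of a vertex subset `A`: boundary weight divided by its measure. -/
noncomputable def conductance {V : Type*} [Fintype V] [DecidableEq V]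
    (w : V → V → ℝ) (μ : V → ℝ) (A : Finset V) : ℝ :=
  (∑ i ∈ A, ∑ j ∈ Aᶜ, w i j) / (∑ i ∈ A, μ i)

/-- The `k`-way Cheeger constant: infimum over `k`-tuples of pairwise disjoint
nonempty vertex subsets of the maximal conductance. -/
noncomputable def cheeger {V : Type*} [Fintype V] [DecidableEq V]
    (k : ℕ) (w : V → V → ℝ) (μ : V → ℝ) : ℝ :=
  sInf {r | ∃ A : Fin k → Finset V, (∀ i, (A i).Nonempty) ∧
    Pairwise (Function.onFun Disjoint A) ∧ r = ⨆ i, conductance w μ (A i)}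

/-- Weighted degree `d(i) = ∑_j w_{ij}` (with `w` vanishing off edges). -/
noncomputable def wdeg {V : Type*} [Fintype V] (w : V → V → ℝ) (i : V) : ℝ := ∑ j, w i j

/-- The normalized Laplacian `𝔏 = M⁻¹ (D + K - A)`. -/
noncomputable def normLap {V : Type*} [Fintype V] [DecidableEq V]
    (w : V → V → ℝ) (μ κ : V → ℝ) : Matrix V V ℝ :=
  (Matrix.diagonal μ)⁻¹ *
    (Matrix.diagonal (wdeg w) + Matrix.diagonal κ - Matrix.of w)

/-- `τ_G = max_i d(i)/μ_i`. -/
noncomputable def tauMax {V : Type*} [Fintype V] (w : V → V → ℝ) (μ : V → ℝ) : ℝ :=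
  ⨆ i, wdeg w i / μ i

/-!
Let `t = λ_k`. Deleting one endpoint of each of the `ℓ` edges outside a spanning tree leaves a
forest. Call a vertex set rich if it supports a nonzero function with Rayleigh quotient at most `t`.
A test function on a union of two sets with no edge between them restricts to the two sets, and one
of the restrictions has Rayleigh quotient at most `t`; so richness is decided on connected
components. In a forest, successively contracting leaves that are not rich and splitting off those
that are produces disjoint rich sets together with a set `R` of as many vertices such that removing
`R` leaves no rich set. If `R` had fewer than `k - ℓ` vertices then, with the deleted endpoints,
fewer than `k` vertices would be removed altogether; but a combination of the first `k`
eigenfunctions can be made to vanish on any `k - 1` vertices, a contradiction. Finally, Cheeger's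
inequality on each of the `k - ℓ` rich sets gives a subset of conductance at most `√(2 τ_G t)`.
-/

namespace MultiwayCheeger

variable {V : Type*}

section Forest

theorem exists_subsingleton_neighborSet_of_isAcyclic [Finite V] [Nonempty V] {G : SimpleGraph V}
    (hG : G.IsAcyclic) : ∃ x, (G.neighborSet x).Subsingleton := by
  obtain ⟨x, y, p, hp, hmax⟩ := SimpleGraph.Walk.exists_isPath_forall_isPath_length_le_length G
  have eq_snd : ∀ z ∈ G.neighborSet x, z = p.snd := by
    intro z hxz
    rw [SimpleGraph.mem_neighborSet] at hxz
    refine hG.eq_snd_of_adj_start hp hxz ?_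
    by_contra hz
    have := hmax _ _ (p.cons hxz.symm) (hp.cons hz)
    simp at this
  exact ⟨x, fun a ha b hb => (eq_snd a ha).trans (eq_snd b hb).symm⟩

theorem exists_subsingleton_inter_neighborSet_of_isAcyclic_induce {G : SimpleGraph V}
    {W : Finset V} (hW : (G.induce (W : Set V)).IsAcyclic) (hne : W.Nonempty) :
    ∃ x ∈ W, ((W : Set V) ∩ G.neighborSet x).Subsingleton := by
  have : Nonempty (W : Set V) := hne.to_subtype
  obtain ⟨x, hx⟩ := exists_subsingleton_neighborSet_of_isAcyclic hW
  refine ⟨x, x.2, fun a ha b hb => ?_⟩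
  exact congrArg Subtype.val (@hx ⟨a, ha.1⟩ ha.2 ⟨b, hb.1⟩ hb.2)

theorem exists_isAcyclic_induce_compl_of_connected [Fintype V] {G : SimpleGraph V}
    [Fintype G.edgeSet] (hG : G.Connected) :
    ∃ Z : Finset V, (G.induce (Zᶜ : Set V)).IsAcyclic ∧
      Z.card ≤ G.edgeFinset.card + 1 - Fintype.card V := by
  classical
  obtain ⟨T, hTG, hT⟩ := hG.exists_isTree_le
  -- One endpoint of each edge outside a spanning tree.
  refine ⟨(G.edgeFinset \ T.edgeFinset).image (fun e => e.out.1), ?_, ?_⟩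
  · refine (hT.isAcyclic.induce _).anti fun i j hij => ?_
    by_contra hTij
    have hmem : s(i.1, j.1) ∈ G.edgeFinset \ T.edgeFinset := by simp_all
    rcases Sym2.mem_iff.1 (Sym2.out_fst_mem s(i.1, j.1)) with h | h
    · exact i.2 (Finset.mem_image.2 ⟨_, hmem, h⟩)
    · exact j.2 (Finset.mem_image.2 ⟨_, hmem, h⟩)
  · refine Finset.card_image_le.trans ?_
    rw [Finset.card_sdiff_of_subset (SimpleGraph.edgeFinset_mono hTG), ← hT.card_edgeFinset]
    omega

/-- A property of vertex sets which, whenever it holds for a union of two disjoint sets with no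
edge between them, holds for one of the two. Such a property is decided by the connected
components of a set. -/
def SplitsAlong [DecidableEq V] (G : SimpleGraph V) (P : Finset V → Prop) : Prop :=
  ∀ S T, Disjoint S T → (∀ i ∈ S, ∀ j ∈ T, ¬ G.Adj i j) → P (S ∪ T) → P S ∨ P T

variable [DecidableEq V]

open Classical in
/-- The set `S`, enlarged by `x` if it contains a neighbour of `x`. When `x` is a leaf, this is the
preimage of `S` under the contraction of `x` into its neighbour. -/
noncomputable def absorb (G : SimpleGraph V) (x : V) (S : Finset V) : Finset V :=
  if ∃ y ∈ S, G.Adj x y then insert x S else S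

variable {G : SimpleGraph V} {P : Finset V → Prop} {x : V} {S T W : Finset V}

theorem mem_absorb {i : V} : i ∈ absorb G x S ↔ i ∈ S ∨ i = x ∧ ∃ y ∈ S, G.Adj x y := by
  unfold absorb
  split_ifs with h <;> simp [h, or_comm]

theorem absorb_union : absorb G x (S ∪ T) = absorb G x S ∪ absorb G x T := by
  ext i
  simp only [mem_absorb, Finset.mem_union]
  grind

theorem absorb_of_adj {y : V} (hy : y ∈ S) (hxy : G.Adj x y) : absorb G x S = insert x S :=
  if_pos ⟨y, hy, hxy⟩

theorem absorb_of_forall_not_adj (h : ∀ y ∈ S, ¬ G.Adj x y) : absorb G x S = S :=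
  if_neg fun ⟨y, hy, hxy⟩ => h y hy hxy

theorem absorb_subset (hx : x ∈ W) (hS : S ⊆ W.erase x) : absorb G x S ⊆ W := by
  intro i hi
  rcases mem_absorb.1 hi with hiS | ⟨rfl, -⟩
  · exact Finset.mem_of_mem_erase (hS hiS)
  · exact hx

theorem disjoint_absorb (hx : ((W : Set V) ∩ G.neighborSet x).Subsingleton)
    (hS : S ⊆ W.erase x) (hT : T ⊆ W.erase x) (hST : Disjoint S T) :
    Disjoint (absorb G x S) (absorb G x T) := by
  have not_both : ∀ y ∈ S, ∀ z ∈ T, G.Adj x y → ¬ G.Adj x z := fun y hy z hz hxy hxz =>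
    Finset.disjoint_left.1 hST hy <| hx ⟨Finset.mem_of_mem_erase (hT hz), hxz⟩
      ⟨Finset.mem_of_mem_erase (hS hy), hxy⟩ ▸ hz
  simp only [Finset.disjoint_left, mem_absorb] at hST ⊢
  grind

theorem SplitsAlong.comp_absorb (hP : SplitsAlong G P)
    (hx : ((W : Set V) ∩ G.neighborSet x).Subsingleton) :
    SplitsAlong G fun S => S ⊆ W.erase x ∧ P (absorb G x S) := by
  rintro S T hST hsep ⟨hsub, hu⟩
  obtain ⟨hS, hT⟩ := Finset.union_subset_iff.1 hsub
  rw [absorb_union] at hu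
  have hdisj := disjoint_absorb hx hS hT hST
  refine (hP _ _ hdisj ?_ hu).imp (⟨hS, ·⟩) (⟨hT, ·⟩)
  simp only [Finset.disjoint_left, mem_absorb] at hdisj ⊢
  grind [SimpleGraph.Adj.symm, SimpleGraph.irrefl]

theorem SplitsAlong.absorb_of_insert (hP : SplitsAlong G P) (hx : ¬ P {x}) (hxS : x ∉ S)
    (h : P (insert x S)) : P (absorb G x S) := by
  by_cases hadj : ∃ y ∈ S, G.Adj x y
  · obtain ⟨y, hy, hxy⟩ := hadj
    rwa [absorb_of_adj hy hxy]
  · push Not at hadj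
    rw [absorb_of_forall_not_adj hadj]
    exact (hP {x} S (Finset.disjoint_singleton_left.2 hxS) (by simpa using hadj) h).resolve_left hx

/-- Packing–covering duality for `P` in `W`: a hitting set `R`, whose removal from `W` leaves a set
without the property `P`, and a packing of subsets of `W` with the property `P`. The members of the
packing are indexed by `R`, so the two have equal size. -/
def HasPackingTransversal (P : Finset V → Prop) (W : Finset V) : Prop :=
  ∃ R ⊆ W, ∃ A : V → Finset V, (∀ v ∈ R, A v ⊆ W ∧ P (A v)) ∧
    (R : Set V).PairwiseDisjoint A ∧ ¬ P (W \ R)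

theorem HasPackingTransversal.of_erase (hxW : x ∈ W) (hx : P {x})
    (h : HasPackingTransversal P (W.erase x)) : HasPackingTransversal P W := by
  obtain ⟨R, hR, A, hA, hdisj, hcov⟩ := h
  have hsub : W.erase x ⊆ W := Finset.erase_subset x W
  have hxR : x ∉ R := fun h => Finset.notMem_erase x W (hR h)
  have hAx : ∀ v ∈ R, x ∉ A v := fun v hv h => Finset.notMem_erase x W ((hA v hv).1 h)
  have hAR : ∀ v ∈ R, Function.update A x {x} v = A v := fun v hv =>
    Function.update_of_ne (ne_of_mem_of_not_mem hv hxR) _ _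
  refine ⟨insert x R, Finset.insert_subset hxW (hR.trans hsub),
    Function.update A x {x}, ?_, ?_, ?_⟩
  · rw [Finset.forall_mem_insert, Function.update_self]
    refine ⟨⟨Finset.singleton_subset_iff.2 hxW, hx⟩, fun v hv => ?_⟩
    rw [hAR v hv]
    exact ⟨(hA v hv).1.trans hsub, (hA v hv).2⟩
  · rw [Finset.coe_insert, Set.pairwiseDisjoint_insert_of_notMem (Finset.mem_coe.not.2 hxR)]
    refine ⟨fun u hu v hv huv => ?_, fun v hv => ?_⟩
    · simpa only [Function.onFun, hAR u hu, hAR v hv] using hdisj hu hv huv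
    · rw [Function.update_self, hAR v hv]
      exact Finset.disjoint_singleton_left.2 (hAx v hv)
  · rwa [Finset.sdiff_insert, ← Finset.erase_sdiff_comm]

theorem HasPackingTransversal.of_comp_absorb (hP : SplitsAlong G P) (hxW : x ∈ W)
    (hleaf : ((W : Set V) ∩ G.neighborSet x).Subsingleton) (hx : ¬ P {x})
    (h : HasPackingTransversal (fun S => S ⊆ W.erase x ∧ P (absorb G x S)) (W.erase x)) :
    HasPackingTransversal P W := by
  obtain ⟨R, hR, A, hA, hdisj, hcov⟩ := h
  have hxR : x ∉ R := fun h => Finset.notMem_erase x W (hR h)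
  refine ⟨R, hR.trans (Finset.erase_subset x W), fun v => absorb G x (A v), fun v hv =>
    ⟨absorb_subset hxW (hA v hv).1, (hA v hv).2.2⟩, fun u hu v hv huv =>
    disjoint_absorb hleaf (hA u hu).1 (hA v hv).1 (hdisj hu hv huv), fun h => ?_⟩
  refine hcov ⟨Finset.sdiff_subset, hP.absorb_of_insert hx (by simp) ?_⟩
  rwa [← Finset.insert_sdiff_of_notMem _ hxR, Finset.insert_erase hxW]

theorem SplitsAlong.hasPackingTransversal (hP : SplitsAlong G P) (hP₀ : ¬ P ∅)
    (hW : (G.induce (W : Set V)).IsAcyclic) : HasPackingTransversal P W := by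
  induction W using Finset.strongInduction generalizing P with
  | H W ih =>
  obtain rfl | hne := W.eq_empty_or_nonempty
  · exact ⟨∅, by simp, fun _ => ∅, by simp, by simp, by simpa using hP₀⟩
  obtain ⟨x, hxW, hx⟩ := exists_subsingleton_inter_neighborSet_of_isAcyclic_induce hW hne
  have hlt : W.erase x ⊂ W := Finset.erase_ssubset hxW
  have hWx : (G.induce (W.erase x : Set V)).IsAcyclic :=
    hW.embedding (G.induceHomOfLE (Finset.coe_subset.2 hlt.subset))
  by_cases hPx : P {x}
  · exact (ih _ hlt hP hP₀ hWx).of_erase hxW hPx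
  · exact (ih _ hlt (hP.comp_absorb hx) (by simpa [absorb] using hP₀) hWx).of_comp_absorb
      hP hxW hx hPx

end Forest

section Coarea

theorem induction_on_layers [Finite V] {p : (V → ℝ) → Prop} (zero : p 0)
    (add_indicator : ∀ (g : V → ℝ) (S : Finset V) (c : ℝ), 0 ≤ g → Function.support g ⊆ S → 0 < c →
      p g → p (g + (S : Set V).indicator fun _ => c))
    (g : V → ℝ) (hg : 0 ≤ g) : p g := by
  induction hS : (Function.support g).toFinite.toFinset using Finset.strongInduction
    generalizing g with
  | H S ih =>
  have mem_S : ∀ i, i ∈ S ↔ g i ≠ 0 := by simp [← hS]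
  obtain rfl | hne := S.eq_empty_or_nonempty
  · rwa [show g = 0 from funext fun i => not_not.1 fun h => by simpa using (mem_S i).2 h]
  obtain ⟨s, hsS, hmin⟩ := S.exists_min_image g hne
  set layer : V → ℝ := (S : Set V).indicator fun _ => g s with hlayer
  have layer_le : layer ≤ g := Set.indicator_le' hmin fun i _ => hg i
  have hsupp : Function.support (g - layer) ⊆ S := fun i hi => by
    by_contra h
    simp_all
  rw [← sub_add_cancel g layer]
  refine add_indicator _ S _ (sub_nonneg.2 layer_le) hsupp
    ((hg s).lt_of_ne' ((mem_S s).1 hsS)) (ih _ ?_ _ (sub_nonneg.2 layer_le) rfl)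
  refine (Finset.ssubset_iff_of_subset (by simpa using hsupp)).2 ⟨s, hsS, ?_⟩
  simp [hlayer, hsS]

variable [Fintype V]

/-- The `w`-weighted total variation `∑_{i,j} w_{ij} |g_i - g_j|` over unordered pairs, encoded as
half of the sum over ordered pairs. -/
noncomputable def totalVariation (w : V → V → ℝ) (g : V → ℝ) : ℝ :=
  (∑ i, ∑ j, w i j * |g i - g j|) / 2

variable [DecidableEq V]

/-- The weight of the edges leaving `S`, which is the numerator of `conductance`. -/
def boundaryWeight (w : V → V → ℝ) (S : Finset V) : ℝ :=
  ∑ i ∈ S, ∑ j ∈ Sᶜ, w i j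

variable {w : V → V → ℝ} {μ : V → ℝ}

theorem boundaryWeight_eq_sum_ite (w : V → V → ℝ) (S : Finset V) :
    boundaryWeight w S = ∑ i, ∑ j, if i ∈ S ∧ j ∉ S then w i j else 0 := by
  simp only [boundaryWeight, ite_and, ← Finset.mem_compl (a := _) (s := S), Finset.sum_ite_mem,
    Finset.univ_inter, Finset.sum_ite_irrel, Finset.sum_const_zero]

theorem totalVariation_add_indicator (hsymm : ∀ i j, w i j = w j i) {g : V → ℝ} (hg : 0 ≤ g)
    {S : Finset V} (hgS : Function.support g ⊆ S) {c : ℝ} (hc : 0 ≤ c) :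
    totalVariation w (g + (S : Set V).indicator fun _ => c) =
      totalVariation w g + c * boundaryWeight w S := by
  set h := g + (S : Set V).indicator fun _ => c with hh
  have of_mem : ∀ i ∈ S, h i = g i + c := fun i hi => by simp [hh, hi]
  have of_notMem : ∀ i ∉ S, g i = 0 ∧ h i = 0 := fun i hi => by
    have : g i = 0 := Function.notMem_support.1 fun h => hi (hgS h)
    simp [hh, hi, this]
  have abs_sub : ∀ i j, w i j * |h i - h j| = w i j * |g i - g j| +
      c * (if i ∈ S ∧ j ∉ S then w i j else 0) + c * (if j ∈ S ∧ i ∉ S then w j i else 0) := by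
    intro i j
    have hgi : 0 ≤ g i := hg i
    have hgj : 0 ≤ g j := hg j
    by_cases hi : i ∈ S <;> by_cases hj : j ∈ S
    · simp [hi, hj, of_mem]
    · simp only [of_mem i hi, of_notMem j hj, hi, hj, sub_zero]
      rw [abs_of_nonneg (by positivity), abs_of_nonneg hgi]
      simp only [not_false_eq_true, and_self, if_true, if_false, false_and]
      ring
    · simp only [of_mem j hj, of_notMem i hi, hi, hj, zero_sub, abs_neg]
      rw [abs_of_nonneg (by positivity), abs_of_nonneg hgj]
      simp only [not_false_eq_true, and_self, if_true, if_false, false_and, hsymm i j]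
      ring
    · simp [hi, hj, of_notMem]
  have swap : ∑ i, ∑ j, (if j ∈ S ∧ i ∉ S then w j i else 0) = boundaryWeight w S := by
    rw [Finset.sum_comm, boundaryWeight_eq_sum_ite]
  simp only [totalVariation, abs_sub, Finset.sum_add_distrib, ← Finset.mul_sum, swap,
    ← boundaryWeight_eq_sum_ite]
  ring

/-- The coarea inequality: an isoperimetric inequality on the subsets of `A` extends from indicator
functions to nonnegative functions, which are positive combinations of indicators of level sets. -/
theorem mul_sum_le_totalVariation (hsymm : ∀ i j, w i j = w j i) {c : ℝ} {A : Finset V}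
    (hA : ∀ S ⊆ A, c * ∑ i ∈ S, μ i ≤ boundaryWeight w S) {g : V → ℝ} (hg : 0 ≤ g)
    (hgA : Function.support g ⊆ A) : c * ∑ i, μ i * g i ≤ totalVariation w g := by
  refine induction_on_layers
    (p := fun g => Function.support g ⊆ A → c * ∑ i, μ i * g i ≤ totalVariation w g)
    (by simp [totalVariation]) (fun g S a hg hgS ha ih hgA => ?_) g hg hgA
  have hSA : S ⊆ A := fun i hi => hgA <| by
    have : 0 ≤ g i := hg i
    simp only [Function.mem_support, Pi.add_apply, Set.indicator_of_mem (Finset.mem_coe.2 hi)]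
    positivity
  have sum_eq : ∑ i, μ i * (g + (S : Set V).indicator fun _ => a) i =
      ∑ i, μ i * g i + a * ∑ i ∈ S, μ i := by
    simp [mul_add, Finset.sum_add_distrib, Set.indicator_apply, Finset.mul_sum, mul_comm]
  rw [totalVariation_add_indicator hsymm hg hgS ha.le, sum_eq]
  have layer := mul_le_mul_of_nonneg_left (hA S hSA) ha.le
  have := ih (hgS.trans (Finset.coe_subset.2 hSA))
  linarith

end Coarea

section Rayleigh

theorem mul_eq_zero_of_disjoint_support {α M : Type*} [MulZeroClass M] {f g : α → M}
    (hfg : Disjoint (Function.support f) (Function.support g)) (i : α) : f i * g i = 0 := by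
  by_cases hi : f i = 0
  · rw [hi, zero_mul]
  · rw [Function.disjoint_support_iff.1 hfg hi, Pi.zero_apply, mul_zero]

variable [Fintype V]

/-- The quadratic form `f ↦ ⟨f, (D + K - A) f⟩` of the Laplacian, with the sum over edges encoded as
half of the sum over ordered pairs. -/
noncomputable def dirichletForm (w : V → V → ℝ) (κ f : V → ℝ) : ℝ :=
  (∑ i, ∑ j, w i j * (f i - f j) ^ 2) / 2 + ∑ i, κ i * f i ^ 2

/-- Some nonzero function supported in `S` has Rayleigh quotient at most `t`; in other words, the
first Dirichlet eigenvalue of the normalized Laplacian on `S` is at most `t`. -/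
def HasRayleighLE (w : V → V → ℝ) (μ κ : V → ℝ) (t : ℝ) (S : Finset V) : Prop :=
  ∃ f : V → ℝ, f ≠ 0 ∧ Function.support f ⊆ S ∧ dirichletForm w κ f ≤ t * ∑ i, μ i * f i ^ 2

variable {w : V → V → ℝ} {μ κ : V → ℝ} {t : ℝ}

theorem HasRayleighLE.nonempty {S : Finset V} (h : HasRayleighLE w μ κ t S) : S.Nonempty := by
  obtain ⟨f, hf, hfS, -⟩ := h
  exact Finset.coe_nonempty.1 ((Function.support_nonempty_iff.2 hf).mono hfS)

theorem sum_mul_add_sq (μ : V → ℝ) {f g : V → ℝ}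
    (hfg : Disjoint (Function.support f) (Function.support g)) :
    ∑ i, μ i * (f + g) i ^ 2 = ∑ i, μ i * f i ^ 2 + ∑ i, μ i * g i ^ 2 := by
  have mul_eq_zero : ∀ i, f i * g i = 0 := mul_eq_zero_of_disjoint_support hfg
  rw [← Finset.sum_add_distrib]
  refine Finset.sum_congr rfl fun i _ => ?_
  rw [Pi.add_apply]
  linear_combination (2 * μ i) * mul_eq_zero i

theorem dirichletForm_add (hsymm : ∀ i j, w i j = w j i) (κ : V → ℝ) {f g : V → ℝ}
    (hfg : Disjoint (Function.support f) (Function.support g))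
    (hsep : ∀ i ∈ Function.support f, ∀ j ∈ Function.support g, w i j = 0) :
    dirichletForm w κ (f + g) = dirichletForm w κ f + dirichletForm w κ g := by
  have mul_eq_zero : ∀ i, f i * g i = 0 := mul_eq_zero_of_disjoint_support hfg
  have weight_mul_eq_zero : ∀ i j, w i j * (f i * g j) = 0 := by
    intro i j
    by_cases hi : f i = 0
    · simp [hi]
    by_cases hj : g j = 0
    · simp [hj]
    rw [hsep i hi j hj, zero_mul]
  have weighted_sq_add : ∀ i j, w i j * ((f + g) i - (f + g) j) ^ 2 =
      w i j * (f i - f j) ^ 2 + w i j * (g i - g j) ^ 2 := by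
    intro i j
    have hji := hsymm i j ▸ weight_mul_eq_zero j i
    simp only [Pi.add_apply]
    linear_combination 2 * w i j * (mul_eq_zero i + mul_eq_zero j) -
      2 * weight_mul_eq_zero i j - 2 * hji
  simp only [dirichletForm, sum_mul_add_sq κ hfg, weighted_sq_add, Finset.sum_add_distrib]
  ring

theorem splitsAlong_hasRayleighLE [DecidableEq V] {G : SimpleGraph V}
    (hsymm : ∀ i j, w i j = w j i) (hG : ∀ i j, ¬ G.Adj i j → w i j = 0) :
    SplitsAlong G (HasRayleighLE w μ κ t) := by
  rintro S T hST hsep ⟨f, hf, hfST, hq⟩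
  set g : V → ℝ := (S : Set V).indicator f with hg
  set h : V → ℝ := (T : Set V).indicator f with hh
  have hgS : Function.support g ⊆ S := Set.support_indicator_subset
  have hhT : Function.support h ⊆ T := Set.support_indicator_subset
  have f_eq : f = g + h := by
    rw [Finset.coe_union, ← Set.indicator_eq_self,
      Set.indicator_union_of_disjoint (Finset.disjoint_coe.2 hST)] at hfST
    exact hfST.symm
  have hgh : Disjoint (Function.support g) (Function.support h) :=
    (Finset.disjoint_coe.2 hST).mono hgS hhT
  by_cases hg₀ : g = 0
  · exact .inr ⟨f, hf, by simpa [f_eq, hg₀] using hhT, hq⟩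
  by_cases hh₀ : h = 0
  · exact .inl ⟨f, hf, by simpa [f_eq, hh₀] using hgS, hq⟩
  rw [f_eq, sum_mul_add_sq μ hgh, mul_add, dirichletForm_add hsymm κ hgh fun i hi j hj =>
    hG i j (hsep i (hgS hi) j (hhT hj))] at hq
  by_cases hqg : dirichletForm w κ g ≤ t * ∑ i, μ i * g i ^ 2
  · exact .inl ⟨g, hg₀, hgS, hqg⟩
  · exact .inr ⟨h, hh₀, hhT, by linarith⟩

end Rayleigh

section CheegerInequality

variable [Fintype V] {w : V → V → ℝ} {μ κ : V → ℝ}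

theorem wdeg_le_tauMax_mul (hμ : ∀ i, 0 < μ i) (i : V) : wdeg w i ≤ tauMax w μ * μ i :=
  (div_le_iff₀ (hμ i)).1 (le_ciSup (f := fun i => wdeg w i / μ i) (Set.finite_range _).bddAbove i)

theorem sum_sum_mul_sq_left (w : V → V → ℝ) (f : V → ℝ) :
    ∑ i, ∑ j, w i j * f i ^ 2 = ∑ i, wdeg w i * f i ^ 2 := by
  simp only [wdeg, Finset.sum_mul]

theorem sum_sum_mul_sq_right (hsymm : ∀ i j, w i j = w j i) (f : V → ℝ) :
    ∑ i, ∑ j, w i j * f j ^ 2 = ∑ i, wdeg w i * f i ^ 2 := by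
  rw [Finset.sum_comm, ← sum_sum_mul_sq_left]
  simp only [hsymm]

theorem sum_sum_mul_add_sq_le (hsymm : ∀ i j, w i j = w j i) (hw : ∀ i j, 0 ≤ w i j)
    (hμ : ∀ i, 0 < μ i) (f : V → ℝ) :
    ∑ i, ∑ j, w i j * (f i + f j) ^ 2 ≤ 4 * tauMax w μ * ∑ i, μ i * f i ^ 2 := by
  calc ∑ i, ∑ j, w i j * (f i + f j) ^ 2
      ≤ ∑ i, ∑ j, w i j * (2 * (f i ^ 2 + f j ^ 2)) := by
        gcongr with i _ j _
        · exact hw i j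
        · exact add_sq_le
    _ = 2 * (∑ i, ∑ j, w i j * f i ^ 2 + ∑ i, ∑ j, w i j * f j ^ 2) := by
        simp only [Finset.mul_sum, ← Finset.sum_add_distrib]
        exact Finset.sum_congr rfl fun i _ => Finset.sum_congr rfl fun j _ => by ring
    _ = 4 * ∑ i, wdeg w i * f i ^ 2 := by
        rw [sum_sum_mul_sq_left, sum_sum_mul_sq_right hsymm]
        ring
    _ ≤ 4 * ∑ i, tauMax w μ * μ i * f i ^ 2 := by
        gcongr with i
        exact wdeg_le_tauMax_mul hμ i
    _ = 4 * tauMax w μ * ∑ i, μ i * f i ^ 2 := by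
        simp only [Finset.mul_sum, mul_assoc]

theorem totalVariation_sq_sq_le (hsymm : ∀ i j, w i j = w j i) (hw : ∀ i j, 0 ≤ w i j)
    (hμ : ∀ i, 0 < μ i) (hκ : ∀ i, 0 ≤ κ i) (f : V → ℝ) :
    totalVariation w (fun i => f i ^ 2) ^ 2 ≤
      2 * tauMax w μ * (∑ i, μ i * f i ^ 2) * dirichletForm w κ f := by
  have sum_nonneg : ∀ {F : V → V → ℝ}, (∀ i j, 0 ≤ F i j) → 0 ≤ ∑ i, ∑ j, w i j * F i j :=
    fun hF => Finset.sum_nonneg fun i _ => Finset.sum_nonneg fun j _ => mul_nonneg (hw i j) (hF i j)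
  have cauchy_schwarz : (∑ i, ∑ j, w i j * |f i ^ 2 - f j ^ 2|) ^ 2 ≤
      (∑ i, ∑ j, w i j * (f i + f j) ^ 2) * ∑ i, ∑ j, w i j * (f i - f j) ^ 2 := by
    simp only [← Finset.sum_product']
    refine Finset.sum_sq_le_sum_mul_sum_of_sq_le_mul _
      (fun p _ => mul_nonneg (hw _ _) (sq_nonneg _))
      (fun p _ => mul_nonneg (hw _ _) (sq_nonneg _)) fun p _ => le_of_eq ?_
    rw [mul_pow, sq_abs]
    ring
  have energy_le : (∑ i, ∑ j, w i j * (f i - f j) ^ 2) / 2 ≤ dirichletForm w κ f :=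
    le_add_of_nonneg_right <| Finset.sum_nonneg fun i _ => mul_nonneg (hκ i) (sq_nonneg _)
  have add_sq_le := sum_sum_mul_add_sq_le hsymm hw hμ f
  have energy_nonneg := sum_nonneg fun i j => sq_nonneg (f i - f j)
  have add_sq_nonneg := sum_nonneg fun i j => sq_nonneg (f i + f j)
  calc totalVariation w (fun i => f i ^ 2) ^ 2
      ≤ (∑ i, ∑ j, w i j * (f i + f j) ^ 2) / 2 *
          ((∑ i, ∑ j, w i j * (f i - f j) ^ 2) / 2) := by
        rw [totalVariation, div_pow]
        linarith
    _ ≤ (4 * tauMax w μ * ∑ i, μ i * f i ^ 2) / 2 * dirichletForm w κ f := by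
        gcongr
        linarith
    _ = 2 * tauMax w μ * (∑ i, μ i * f i ^ 2) * dirichletForm w κ f := by ring

variable [DecidableEq V]

theorem conductance_nonneg (hw : ∀ i j, 0 ≤ w i j) (hμ : ∀ i, 0 < μ i) (S : Finset V) :
    0 ≤ conductance w μ S :=
  div_nonneg (Finset.sum_nonneg fun i _ => Finset.sum_nonneg fun j _ => hw i j)
    (Finset.sum_nonneg fun i _ => (hμ i).le)

theorem cheeger_le (hw : ∀ i j, 0 ≤ w i j) (hμ : ∀ i, 0 < μ i) {m : ℕ} {A : Fin m → Finset V}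
    (hA : ∀ i, (A i).Nonempty) (hdisj : Pairwise (Function.onFun Disjoint A)) {r : ℝ} (hr : 0 ≤ r)
    (h : ∀ i, conductance w μ (A i) ≤ r) : cheeger m w μ ≤ r := by
  have bddBelow : BddBelow {r | ∃ A : Fin m → Finset V, (∀ i, (A i).Nonempty) ∧
      Pairwise (Function.onFun Disjoint A) ∧ r = ⨆ i, conductance w μ (A i)} := by
    refine ⟨0, ?_⟩
    rintro _ ⟨B, -, -, rfl⟩
    exact Real.iSup_nonneg fun i => conductance_nonneg hw hμ (B i)
  exact csInf_le_of_le bddBelow ⟨A, hA, hdisj, rfl⟩ (Real.iSup_le h hr)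

theorem exists_conductance_mul_le (hμ : ∀ i, 0 < μ i) {A : Finset V} (hA : A.Nonempty) :
    ∃ S ⊆ A, S.Nonempty ∧
      ∀ T ⊆ A, conductance w μ S * ∑ i ∈ T, μ i ≤ boundaryWeight w T := by
  obtain ⟨S, hS, hmin⟩ := (A.powerset.filter (·.Nonempty)).exists_min_image (conductance w μ)
    ⟨A, by simpa using hA⟩
  simp only [Finset.mem_filter, Finset.mem_powerset] at hS hmin
  refine ⟨S, hS.1, hS.2, fun T hTA => ?_⟩
  obtain rfl | hT := T.eq_empty_or_nonempty
  · simp [boundaryWeight]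
  · exact (le_div_iff₀ (Finset.sum_pos (fun i _ => hμ i) hT)).1 (hmin T ⟨hTA, hT⟩)

theorem HasRayleighLE.exists_conductance_le (hsymm : ∀ i j, w i j = w j i) (hw : ∀ i j, 0 ≤ w i j)
    (hμ : ∀ i, 0 < μ i) (hκ : ∀ i, 0 ≤ κ i) {t : ℝ} {A : Finset V}
    (hA : HasRayleighLE w μ κ t A) :
    ∃ S ⊆ A, S.Nonempty ∧ conductance w μ S ≤ Real.sqrt (2 * tauMax w μ * t) := by
  obtain ⟨S, hSA, hS, hmin⟩ := exists_conductance_mul_le (w := w) hμ hA.nonempty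
  obtain ⟨f, hf, hfA, hq⟩ := hA
  refine ⟨S, hSA, hS, Real.le_sqrt_of_sq_le ?_⟩
  set N := ∑ i, μ i * f i ^ 2
  have N_pos : 0 < N := by
    obtain ⟨i, hi⟩ := Function.ne_iff.1 hf
    exact Finset.sum_pos' (fun j _ => mul_nonneg (hμ j).le (sq_nonneg _))
      ⟨i, Finset.mem_univ i, mul_pos (hμ i) (sq_pos_of_ne_zero hi)⟩
  have tau_nonneg : 0 ≤ tauMax w μ := Real.iSup_nonneg fun i =>
    div_nonneg (Finset.sum_nonneg fun j _ => hw i j) (hμ i).le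
  have coarea : conductance w μ S * N ≤ totalVariation w fun i => f i ^ 2 :=
    mul_sum_le_totalVariation hsymm hmin (fun i => sq_nonneg (f i)) fun i hi =>
      hfA fun h => hi (by simp [h])
  refine le_of_mul_le_mul_right ?_ (pow_pos N_pos 2)
  calc conductance w μ S ^ 2 * N ^ 2
      = (conductance w μ S * N) ^ 2 := (mul_pow _ _ 2).symm
    _ ≤ totalVariation w (fun i => f i ^ 2) ^ 2 :=
        pow_le_pow_left₀ (mul_nonneg (conductance_nonneg hw hμ S) N_pos.le) coarea 2
    _ ≤ 2 * tauMax w μ * N * dirichletForm w κ f := totalVariation_sq_sq_le hsymm hw hμ hκ f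
    _ ≤ 2 * tauMax w μ * N * (t * N) := by gcongr
    _ = 2 * tauMax w μ * t * N ^ 2 := by ring

end CheegerInequality

section Spectral

theorem exists_ne_zero_forall_mulVec_eq_zero {K m ι : Type*} [Field K] [Fintype ι]
    (U : Matrix m ι K) {Z : Finset m} {I : Finset ι} (hZI : Z.card < I.card) :
    ∃ d : ι → K, d ≠ 0 ∧ Function.support d ⊆ I ∧ ∀ z ∈ Z, (U *ᵥ d) z = 0 := by
  classical
  let Φ : (ι → K) →ₗ[K] (Z → K) × ((Iᶜ : Finset ι) → K) :=
    (LinearMap.funLeft K K (↑) ∘ₗ U.mulVecLin).prod (LinearMap.funLeft K K (↑))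
  have finrank_lt : Module.finrank K ((Z → K) × ((Iᶜ : Finset ι) → K)) <
      Module.finrank K (ι → K) := by
    have := I.card_add_card_compl
    simp only [Module.finrank_prod, Module.finrank_fintype_fun_eq_card, Fintype.card_coe]
    omega
  obtain ⟨d, hd, hd₀⟩ :=
    Submodule.exists_mem_ne_zero_of_ne_bot (Φ.ker_ne_bot_of_finrank_lt finrank_lt)
  obtain ⟨hdZ, hdI⟩ := Prod.mk.inj hd
  refine ⟨d, hd₀, fun i hi => ?_, fun z hz => congrFun hdZ ⟨z, hz⟩⟩
  by_contra hiI
  exact hi (congrFun hdI ⟨i, by simpa using hiI⟩)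

theorem exists_ne_zero_dotProduct_mulVec_le {ι : Type*} [Fintype ι] [DecidableEq ι]
    {B : Matrix ι ι ℝ} (hB : B.IsHermitian) {a : ℝ} {Z : Finset ι}
    (hZ : Z.card < (Finset.univ.filter fun i => hB.eigenvalues i ≤ a).card) :
    ∃ x : ι → ℝ, x ≠ 0 ∧ (∀ z ∈ Z, x z = 0) ∧ x ⬝ᵥ B *ᵥ x ≤ a * (x ⬝ᵥ x) := by
  set U : Matrix ι ι ℝ := (hB.eigenvectorUnitary : Matrix ι ι ℝ)
  obtain ⟨d, hd₀, hdI, hdZ⟩ := exists_ne_zero_forall_mulVec_eq_zero U hZ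
  have transpose_mul_self : Uᵀ * U = 1 := by
    simpa [star_eq_conjTranspose] using Unitary.coe_star_mul_self hB.eigenvectorUnitary
  have dotProduct_self : U *ᵥ d ⬝ᵥ U *ᵥ d = d ⬝ᵥ d := by
    rw [dotProduct_mulVec, vecMul_mulVec, transpose_mul_self, vecMul_one]
  have transpose_mul_mul : Uᵀ * B * U = diagonal hB.eigenvalues := by
    simpa [Unitary.conjStarAlgAut_apply, star_eq_conjTranspose] using
      hB.conjStarAlgAut_star_eigenvectorUnitary
  have dotProduct_mulVec_self : U *ᵥ d ⬝ᵥ B *ᵥ U *ᵥ d = ∑ i, d i * (hB.eigenvalues i * d i) := by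
    rw [mulVec_mulVec, dotProduct_mulVec, vecMul_mulVec, ← mul_assoc, transpose_mul_mul,
      ← dotProduct_mulVec]
    simp only [dotProduct, mulVec_diagonal]
  refine ⟨U *ᵥ d, fun h => hd₀ ?_, hdZ, ?_⟩
  · rwa [h, dotProduct_zero, eq_comm, dotProduct_self_eq_zero] at dotProduct_self
  · rw [dotProduct_mulVec_self, dotProduct_self, dotProduct, Finset.mul_sum]
    refine Finset.sum_le_sum fun i _ => ?_
    by_cases hi : d i = 0
    · simp [hi]
    have ev_le : hB.eigenvalues i ≤ a := by simpa using hdI hi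
    nlinarith [mul_self_nonneg (d i)]

theorem lt_card_eigenvalues_le {ι : Type*} [Fintype ι] [DecidableEq ι] {B : Matrix ι ι ℝ}
    (hB : B.IsHermitian) {n : ℕ} {lam : Fin n → ℝ} (hmono : Monotone lam)
    (hchar : B.charpoly = ∏ i, (X - C (lam i))) (k : Fin n) :
    k < (Finset.univ.filter fun i => hB.eigenvalues i ≤ lam k).card := by
  have eigenvalues_eq : Finset.univ.val.map hB.eigenvalues = Finset.univ.val.map lam := by
    have := hB.roots_charpoly_eq_eigenvalues
    rw [hchar, Finset.prod_eq_multiset_prod, ← Function.comp_def (fun a => X - C a) lam,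
      ← Multiset.map_map, roots_multiset_prod_X_sub_C] at this
    simpa using this.symm
  have card_eq := congrArg (Multiset.countP (· ≤ lam k)) eigenvalues_eq
  simp only [Multiset.countP_map] at card_eq
  calc (k : ℕ) < (Finset.Iic k).card := by simp
    _ ≤ (Finset.univ.filter fun i => lam i ≤ lam k).card :=
      Finset.card_le_card fun i hi => by simpa using hmono (Finset.mem_Iic.1 hi)
    _ = (Finset.univ.filter fun i => hB.eigenvalues i ≤ lam k).card := card_eq.symm

variable [Fintype V] [DecidableEq V] {w : V → V → ℝ} {μ κ : V → ℝ}

/-- The Laplacian `D + K - A`. -/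
noncomputable def laplacian (w : V → V → ℝ) (κ : V → ℝ) : Matrix V V ℝ :=
  diagonal (wdeg w) + diagonal κ - of w

/-- The matrix `M^{-1/2} (D + K - A) M^{-1/2}`, which is symmetric and has the same spectrum as the
normalized Laplacian `M⁻¹ (D + K - A)`. -/
noncomputable def symmLaplacian (w : V → V → ℝ) (μ κ : V → ℝ) : Matrix V V ℝ :=
  diagonal (fun i => (√(μ i))⁻¹) * laplacian w κ * diagonal (fun i => (√(μ i))⁻¹)

theorem isHermitian_symmLaplacian (hsymm : ∀ i j, w i j = w j i) (μ κ : V → ℝ) :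
    (symmLaplacian w μ κ).IsHermitian := by
  have hL : (laplacian w κ).IsHermitian :=
    ((isHermitian_diagonal _).add (isHermitian_diagonal _)).sub
      (IsHermitian.ext fun i j => hsymm j i)
  simpa [symmLaplacian] using
    isHermitian_mul_mul_conjTranspose (diagonal fun i => (√(μ i))⁻¹) hL

theorem charpoly_symmLaplacian (hμ : ∀ i, 0 < μ i) (w : V → V → ℝ) (κ : V → ℝ) :
    (symmLaplacian w μ κ).charpoly = (normLap w μ κ).charpoly := by
  have inv_diagonal : (diagonal μ)⁻¹ =
      diagonal (fun i => (√(μ i))⁻¹) * diagonal fun i => (√(μ i))⁻¹ := by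
    refine inv_eq_right_inv ?_
    rw [diagonal_mul_diagonal, diagonal_mul_diagonal, ← diagonal_one]
    congr 1
    funext i
    rw [← mul_inv, Real.mul_self_sqrt (hμ i).le, mul_inv_cancel₀ (hμ i).ne']
  rw [symmLaplacian, charpoly_mul_comm, ← mul_assoc, ← inv_diagonal]
  rfl

theorem dirichletForm_eq_dotProduct_mulVec (hsymm : ∀ i j, w i j = w j i) (κ f : V → ℝ) :
    dirichletForm w κ f = f ⬝ᵥ laplacian w κ *ᵥ f := by
  have energy_eq : ∑ i, ∑ j, w i j * (f i - f j) ^ 2 =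
      2 * (∑ i, wdeg w i * f i ^ 2 - ∑ i, f i * ∑ j, w i j * f j) := by
    calc ∑ i, ∑ j, w i j * (f i - f j) ^ 2
        = ∑ i, ∑ j, w i j * f i ^ 2 + ∑ i, ∑ j, w i j * f j ^ 2 -
            2 * ∑ i, f i * ∑ j, w i j * f j := by
          simp only [Finset.mul_sum, ← Finset.sum_add_distrib, ← Finset.sum_sub_distrib]
          exact Finset.sum_congr rfl fun i _ => Finset.sum_congr rfl fun j _ => by ring
      _ = _ := by
          rw [sum_sum_mul_sq_left, sum_sum_mul_sq_right hsymm]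
          ring
  have dotProduct_eq : f ⬝ᵥ laplacian w κ *ᵥ f =
      ∑ i, wdeg w i * f i ^ 2 + ∑ i, κ i * f i ^ 2 - ∑ i, f i * ∑ j, w i j * f j := by
    rw [laplacian, sub_mulVec, add_mulVec, dotProduct_sub, dotProduct_add]
    simp only [dotProduct, mulVec_diagonal]
    simp only [mulVec, dotProduct, of_apply, mul_left_comm, sq]
  rw [dirichletForm, energy_eq, dotProduct_eq]
  ring

theorem hasRayleighLE_compl (hsymm : ∀ i j, w i j = w j i) (hμ : ∀ i, 0 < μ i) {n : ℕ}
    {lam : Fin n → ℝ} (hmono : Monotone lam)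
    (hchar : (normLap w μ κ).charpoly = ∏ i, (X - C (lam i))) (k : Fin n) {Z : Finset V}
    (hZ : Z.card ≤ k) : HasRayleighLE w μ κ (lam k) Zᶜ := by
  have hB := isHermitian_symmLaplacian hsymm μ κ
  obtain ⟨x, hx₀, hxZ, hx⟩ := exists_ne_zero_dotProduct_mulVec_le hB (hZ.trans_lt
    (lt_card_eigenvalues_le hB hmono ((charpoly_symmLaplacian hμ w κ).trans hchar) k))
  set r : V → ℝ := fun i => (√(μ i))⁻¹
  have r_ne_zero : ∀ i, r i ≠ 0 := fun i => inv_ne_zero (Real.sqrt_pos.2 (hμ i)).ne'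
  have norm_eq : ∑ i, μ i * (diagonal r *ᵥ x) i ^ 2 = x ⬝ᵥ x := by
    refine Finset.sum_congr rfl fun i _ => ?_
    rw [mulVec_diagonal, mul_pow, inv_pow, Real.sq_sqrt (hμ i).le,
      mul_inv_cancel_left₀ (hμ i).ne', sq]
  refine ⟨diagonal r *ᵥ x, fun h => hx₀ ?_, fun i hi => ?_, ?_⟩
  · funext i
    have := congrFun h i
    rw [mulVec_diagonal] at this
    exact (mul_eq_zero.1 this).resolve_left (r_ne_zero i)
  · simp only [Finset.coe_compl, Set.mem_compl_iff, Finset.mem_coe]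
    exact fun hiZ => hi (by simp [mulVec_diagonal, hxZ i hiZ])
  · rw [norm_eq, dirichletForm_eq_dotProduct_mulVec hsymm]
    rw [symmLaplacian, ← mulVec_mulVec, ← mulVec_mulVec, dotProduct_mulVec x,
      ← mulVec_transpose, diagonal_transpose] at hx
    exact hx

end Spectral

end MultiwayCheeger

open MultiwayCheeger in
/-- Here `Z` is a feedback vertex set, whose size takes the place of the cyclomatic number. -/
theorem multiway_cheeger_cyclomatic_general {V : Type*} [Fintype V] [DecidableEq V]
    (G : SimpleGraph V)
    (w : V → V → ℝ) (hsymm : ∀ i j, w i j = w j i) (hw : ∀ i j, 0 ≤ w i j)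
    (hzero : ∀ i j, ¬ G.Adj i j → w i j = 0)
    (μ : V → ℝ) (hμ : ∀ i, 0 < μ i) (κ : V → ℝ) (hκ : ∀ i, 0 ≤ κ i)
    (n : ℕ) (lam : Fin n → ℝ) (hmono : Monotone lam)
    (hchar : (normLap w μ κ).charpoly = ∏ i, (X - C (lam i)))
    (Z : Finset V) (hZ : (G.induce (Zᶜ : Set V)).IsAcyclic)
    (l : ℕ) (hl : Z.card ≤ l) (k : ℕ) (hk1 : l + 1 ≤ k) (hk2 : k ≤ n) :
    cheeger (k - l) w μ ≤ Real.sqrt (2 * tauMax w μ * lam ⟨k - 1, by omega⟩) := by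
  set t := lam ⟨k - 1, by omega⟩
  rw [← Finset.coe_compl] at hZ
  obtain ⟨R, -, A, hA, hdisj, hcov⟩ :=
    (splitsAlong_hasRayleighLE (μ := μ) (κ := κ) (t := t) hsymm hzero).hasPackingTransversal
      (fun h => Finset.not_nonempty_empty h.nonempty) hZ
  have hcard : k - l ≤ R.card := by
    by_contra hlt
    rw [Finset.sdiff_eq_inter_compl, ← Finset.compl_union] at hcov
    exact hcov <| hasRayleighLE_compl hsymm hμ hmono hchar ⟨k - 1, by omega⟩
      ((Finset.card_union_le Z R).trans (by simp only; omega))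
  choose! S hSA hS hScond using fun v (hv : v ∈ R) =>
    (hA v hv).2.exists_conductance_le hsymm hw hμ hκ
  obtain ⟨e⟩ : Nonempty (Fin (k - l) ↪ R) :=
    Function.Embedding.nonempty_of_card_le (by simpa using hcard)
  refine cheeger_le hw hμ (fun i => hS _ (e i).2) (fun i j hij => ?_) (Real.sqrt_nonneg _)
    fun i => hScond _ (e i).2
  exact (hdisj (e i).2 (e j).2 (Subtype.coe_injective.ne (e.injective.ne hij))).mono
    (hSA _ (e i).2) (hSA _ (e j).2)

/-- **Theorem (main).** For a finite connected weighted graph with nonnegative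
potential, with cyclomatic number `ℓ = |E| - |V| + 1`, for every `ℓ + 1 ≤ k ≤ n` one has
`ρ_{k-ℓ}(G) ≤ √(2 τ_G λ_k(G))`, where `λ_1 ≤ … ≤ λ_n` are the eigenvalues of the
normalized Laplacian listed with multiplicity in ascending order. -/
theorem multiway_cheeger_cyclomatic (n : ℕ) (G : SimpleGraph (Fin n)) [DecidableRel G.Adj]
    (hconn : G.Connected)
    (w : Fin n → Fin n → ℝ) (hsymm : ∀ i j, w i j = w j i)
    (hpos : ∀ i j, G.Adj i j → 0 < w i j) (hzero : ∀ i j, ¬ G.Adj i j → w i j = 0)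
    (μ : Fin n → ℝ) (hμ : ∀ i, 0 < μ i)
    (κ : Fin n → ℝ) (hκ : ∀ i, 0 ≤ κ i)
    (lam : Fin n → ℝ) (hmono : Monotone lam)
    (hchar : (normLap w μ κ).charpoly = ∏ i, (X - C (lam i)))
    (l : ℕ) (hl : l = G.edgeFinset.card + 1 - n)
    (k : ℕ) (hk1 : l + 1 ≤ k) (hk2 : k ≤ n) :
    cheeger (k - l) w μ ≤ Real.sqrt (2 * tauMax w μ * lam ⟨k - 1, by omega⟩) := by
  obtain ⟨Z, hZ, hZl⟩ := MultiwayCheeger.exists_isAcyclic_induce_compl_of_connected hconn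
  exact multiway_cheeger_cyclomatic_general G w hsymm
    (fun i j => if h : G.Adj i j then (hpos i j h).le else (hzero i j h).ge) hzero μ hμ κ hκ
    n lam hmono hchar Z hZ l (by simpa [hl] using hZl) k hk1 hk2
end

section
/- Let G = (V,E,w,μ,κ) be a finite weighted tree (a connected graph with |E| = |V| − 1) with nonnegative potential κ ≥ 0. Then for every 1 ≤ k ≤ n, the k-way Cheeger constant satisfies ρ_k(G) ≤ √(2 τ_G λ_k(G)). -/
open BigOperators Matrix Polynomial

/-!
Root the forest and eliminate the variables of the quadratic form of `L - λ_k M` by Gaussian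
elimination from the leaves to the roots, skipping every vertex whose pivot is not positive. The
form is positive definite on the functions that vanish at the skipped vertices, so there are at
least as many skipped vertices as there are eigenvalues `≤ λ_k`, hence at least `k`. Back
substitution from a skipped vertex `v` gives a nonnegative function supported on the part of the
subtree of `v` that is not cut off by other skipped vertices, at which the form is `≤ 0`. These
functions have disjoint supports and Rayleigh quotients `≤ λ_k`, and Cheeger's inequality
(layer-cake formula and Cauchy–Schwarz) produces a set of small conductance inside each support.
-/

section Conductance

variable {V : Type*} [Fintype V] {w : V → V → ℝ} {μ : V → ℝ}

lemma sum_wdeg_mul_le (hμ : ∀ i, 0 < μ i) {f : V → ℝ} (hf : ∀ i, 0 ≤ f i) :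
    ∑ i, wdeg w i * f i ≤ tauMax w μ * ∑ i, μ i * f i := by
  rw [Finset.mul_sum]
  refine Finset.sum_le_sum fun i _ ↦ ?_
  have hi : wdeg w i / μ i ≤ tauMax w μ :=
    le_ciSup (f := fun i ↦ wdeg w i / μ i) (Set.finite_range _).bddAbove i
  rw [← mul_assoc]
  exact mul_le_mul_of_nonneg_right ((div_le_iff₀ (hμ i)).mp hi) (hf i)

lemma sum_sum_mul_sq_nonneg (hw : ∀ i j, 0 ≤ w i j) (f : V → V → ℝ) :
    0 ≤ ∑ i, ∑ j, w i j * f i j ^ 2 :=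
  Finset.sum_nonneg fun i _ ↦ Finset.sum_nonneg fun j _ ↦ mul_nonneg (hw i j) (sq_nonneg _)

lemma sum_sum_mul_eq_sum_wdeg_mul (w : V → V → ℝ) (f : V → ℝ) :
    ∑ i, ∑ j, w i j * f i = ∑ i, wdeg w i * f i := by
  simp_rw [wdeg, Finset.sum_mul]

lemma sum_sum_mul_eq_sum_wdeg_mul_of_symm (hsymm : ∀ i j, w i j = w j i) (f : V → ℝ) :
    ∑ i, ∑ j, w i j * f j = ∑ i, wdeg w i * f i := by
  rw [Finset.sum_comm, ← sum_sum_mul_eq_sum_wdeg_mul]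
  simp_rw [hsymm]

lemma two_mul_sum_mul_max_sub (hsymm : ∀ i j, w i j = w j i) (h : V → ℝ) :
    2 * ∑ i, ∑ j, w i j * max (h i - h j) 0 = ∑ i, ∑ j, w i j * |h i - h j| := by
  have hswap : ∑ i, ∑ j, w i j * max (h i - h j) 0 =
      ∑ i, ∑ j, w i j * max (-(h i - h j)) 0 := by
    rw [Finset.sum_comm]
    simp_rw [neg_sub, hsymm]
  rw [two_mul]
  nth_rw 2 [hswap]
  simp_rw [← Finset.sum_add_distrib, ← mul_add, max_zero_add_max_neg_zero_eq_abs_self]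

lemma sq_sum_mul_abs_sq_sub_sq_le (hw : ∀ i j, 0 ≤ w i j) (hsymm : ∀ i j, w i j = w j i)
    (g : V → ℝ) :
    (∑ i, ∑ j, w i j * |g i ^ 2 - g j ^ 2|) ^ 2 ≤
      (∑ i, ∑ j, w i j * (g i - g j) ^ 2) * (4 * ∑ i, wdeg w i * g i ^ 2) := by
  have sum_add_sq_le :=
    calc ∑ i, ∑ j, w i j * (g i + g j) ^ 2
        ≤ ∑ i, ∑ j, (2 * (w i j * g i ^ 2) + 2 * (w i j * g j ^ 2)) := by
          gcongr with i _ j _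
          linarith [mul_le_mul_of_nonneg_left (add_sq_le (a := g i) (b := g j)) (hw i j)]
      _ = 4 * ∑ i, wdeg w i * g i ^ 2 := by
          simp_rw [Finset.sum_add_distrib, ← Finset.mul_sum]
          rw [sum_sum_mul_eq_sum_wdeg_mul w (g · ^ 2),
            sum_sum_mul_eq_sum_wdeg_mul_of_symm hsymm (g · ^ 2)]
          ring
  refine le_trans ?_ (mul_le_mul_of_nonneg_left sum_add_sq_le
    (sum_sum_mul_sq_nonneg hw fun i j ↦ g i - g j))
  simp only [← Finset.sum_product']
  refine Finset.sum_sq_le_sum_mul_sum_of_sq_le_mul _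
    (fun _ _ ↦ mul_nonneg (hw _ _) (sq_nonneg _))
    (fun _ _ ↦ mul_nonneg (hw _ _) (sq_nonneg _)) fun _ _ ↦ le_of_eq ?_
  rw [mul_pow, sq_abs]
  ring

variable [DecidableEq V]

lemma conductance_nonneg (hw : ∀ i j, 0 ≤ w i j) (hμ : ∀ i, 0 ≤ μ i) (A : Finset V) :
    0 ≤ conductance w μ A :=
  div_nonneg (Finset.sum_nonneg fun i _ ↦ Finset.sum_nonneg fun j _ ↦ hw i j)
    (Finset.sum_nonneg fun i _ ↦ hμ i)

lemma cheeger_le_of_forall_conductance_le (hw : ∀ i j, 0 ≤ w i j) (hμ : ∀ i, 0 ≤ μ i) {k : ℕ}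
    {A : Fin k → Finset V} (hne : ∀ i, (A i).Nonempty)
    (hdisj : Pairwise (Function.onFun Disjoint A)) {c : ℝ} (hc : 0 ≤ c)
    (hA : ∀ i, conductance w μ (A i) ≤ c) :
    cheeger k w μ ≤ c := by
  refine le_trans (csInf_le ⟨0, ?_⟩ ⟨A, hne, hdisj, rfl⟩) (Real.iSup_le hA hc)
  rintro _ ⟨B, -, -, rfl⟩
  exact Real.iSup_nonneg fun i ↦ conductance_nonneg hw hμ (B i)

open Set in
lemma mul_sum_mul_indicator_Ioc_le {h : V → ℝ} (hh : ∀ i, 0 ≤ h i) {c : ℝ}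
    (hc : ∀ A : Finset V, A.Nonempty → (∀ i ∈ A, h i ≠ 0) →
      c * ∑ i ∈ A, μ i ≤ ∑ i ∈ A, ∑ j ∈ Aᶜ, w i j) (t : ℝ) :
    c * ∑ i, μ i * (Ioc 0 (h i)).indicator 1 t ≤
      ∑ i, ∑ j, w i j * (Ioc (h j) (h i)).indicator 1 t := by
  rcases le_or_gt t 0 with ht | ht
  · have ht' (i : V) : ¬ h i < t := (ht.trans (hh i)).not_gt
    simp [ht.not_gt, ht']
  let A : Finset V := {i | t ≤ h i}
  have hμA : ∑ i, μ i * (Ioc 0 (h i)).indicator 1 t = ∑ i ∈ A, μ i := by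
    simp [A, indicator_apply, ht, Finset.sum_filter]
  have hwA : ∑ i, ∑ j, w i j * (Ioc (h j) (h i)).indicator 1 t = ∑ i ∈ A, ∑ j ∈ Aᶜ, w i j := by
    simp only [A, indicator_apply, mem_Ioc, Pi.one_apply, mul_ite, mul_one, mul_zero,
      Finset.compl_filter, not_le, Finset.sum_filter]
    refine Finset.sum_congr rfl fun i _ ↦ ?_
    split_ifs with hi <;> simp [hi]
  rw [hμA, hwA]
  rcases A.eq_empty_or_nonempty with hA | hA
  · simp [hA]
  · exact hc A hA fun i hi ↦ (ht.trans_le (Finset.mem_filter.mp hi).2).ne'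

open MeasureTheory Set in
/-- The layer-cake argument: `max (b - a) 0` is the length of `(a, b]`, so both sides are integrals
over the levels `t` of the superlevel sets `{i | t ≤ h i}`. -/
lemma mul_sum_mul_le_sum_mul_max_sub {h : V → ℝ} (hh : ∀ i, 0 ≤ h i) {c : ℝ}
    (hc : ∀ A : Finset V, A.Nonempty → (∀ i ∈ A, h i ≠ 0) →
      c * ∑ i ∈ A, μ i ≤ ∑ i ∈ A, ∑ j ∈ Aᶜ, w i j) :
    c * ∑ i, μ i * h i ≤ ∑ i, ∑ j, w i j * max (h i - h j) 0 := by
  have integrable_layer (m a b : ℝ) : Integrable fun t ↦ m * (Ioc a b).indicator 1 t :=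
    ((integrable_indicator_iff measurableSet_Ioc).mpr
      (integrableOn_const (C := (1 : ℝ)) (by simp))).const_mul m
  have integral_layer (m a b : ℝ) : ∫ t, m * (Ioc a b).indicator 1 t = m * max (b - a) 0 := by
    rw [integral_const_mul, integral_indicator_one measurableSet_Ioc, Real.volume_real_Ioc]
  calc c * ∑ i, μ i * h i
      = ∫ t, c * ∑ i, μ i * (Ioc 0 (h i)).indicator 1 t := by
        rw [integral_const_mul, integral_finsetSum _ fun _ _ ↦ integrable_layer _ _ _]
        simp [integral_layer, hh]
    _ ≤ ∫ t, ∑ i, ∑ j, w i j * (Ioc (h j) (h i)).indicator 1 t :=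
        integral_mono
          ((integrable_finsetSum _ fun _ _ ↦ integrable_layer _ _ _).const_mul _)
          (integrable_finsetSum _ fun _ _ ↦ integrable_finsetSum _ fun _ _ ↦ integrable_layer _ _ _)
          (mul_sum_mul_indicator_Ioc_le hh hc)
    _ = ∑ i, ∑ j, w i j * max (h i - h j) 0 := by
        rw [integral_finsetSum _ fun _ _ ↦ integrable_finsetSum _ fun _ _ ↦ integrable_layer _ _ _]
        simp_rw [integral_finsetSum _ fun _ _ ↦ integrable_layer _ _ _, integral_layer]

lemma exists_conductance_mul_sum_le (hsymm : ∀ i j, w i j = w j i) (hμ : ∀ i, 0 < μ i)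
    {h : V → ℝ} (hh : ∀ i, 0 ≤ h i) (hne : h ≠ 0) :
    ∃ A : Finset V, A.Nonempty ∧ (∀ i ∈ A, h i ≠ 0) ∧
      2 * (conductance w μ A * ∑ i, μ i * h i) ≤ ∑ i, ∑ j, w i j * |h i - h j| := by
  obtain ⟨v, hv⟩ := Function.ne_iff.mp hne
  obtain ⟨A, ⟨hA, hAh⟩, hmin⟩ := Set.exists_min_image
    {A : Finset V | A.Nonempty ∧ ∀ i ∈ A, h i ≠ 0} (conductance w μ) (Set.toFinite _)
    ⟨{v}, Finset.singleton_nonempty v, by simpa using hv⟩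
  refine ⟨A, hA, hAh, ?_⟩
  rw [← two_mul_sum_mul_max_sub hsymm]
  gcongr
  exact mul_sum_mul_le_sum_mul_max_sub hh fun B hB hBh ↦
    (le_div_iff₀ (Finset.sum_pos (fun i _ ↦ hμ i) hB)).mp (hmin B ⟨hB, hBh⟩)

lemma exists_conductance_le_sqrt_of_sum_mul_sq_sub_le (hw : ∀ i j, 0 ≤ w i j)
    (hsymm : ∀ i j, w i j = w j i) (hμ : ∀ i, 0 < μ i) {g : V → ℝ} (hg : g ≠ 0) {l : ℝ}
    (hl : ∑ i, ∑ j, w i j * (g i - g j) ^ 2 ≤ 2 * (l * ∑ i, μ i * g i ^ 2)) :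
    ∃ A : Finset V, A.Nonempty ∧ (∀ i ∈ A, g i ≠ 0) ∧
      conductance w μ A ≤ √(2 * tauMax w μ * l) := by
  obtain ⟨A, hA, hAg, hAle⟩ := exists_conductance_mul_sum_le hsymm hμ
    (fun i ↦ sq_nonneg (g i)) ((pow_ne_zero_iff two_ne_zero).mpr hg)
  refine ⟨A, hA, fun i hi ↦ (pow_ne_zero_iff two_ne_zero).mp (hAg i hi), ?_⟩
  set c := conductance w μ A
  have hc : 0 ≤ c := conductance_nonneg hw (fun i ↦ (hμ i).le) A
  set M := ∑ i, μ i * g i ^ 2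
  have hM : 0 < M := by
    obtain ⟨v, hv⟩ := Function.ne_iff.mp hg
    exact Finset.sum_pos' (fun i _ ↦ mul_nonneg (hμ i).le (sq_nonneg _))
      ⟨v, Finset.mem_univ v, mul_pos (hμ v) (sq_pos_of_ne_zero hv)⟩
  have hsq : (2 * M) ^ 2 * c ^ 2 ≤ (2 * M) ^ 2 * (2 * tauMax w μ * l) :=
    calc (2 * M) ^ 2 * c ^ 2 = (2 * (c * M)) ^ 2 := by ring
      _ ≤ (∑ i, ∑ j, w i j * |g i ^ 2 - g j ^ 2|) ^ 2 :=
        pow_le_pow_left₀ (by positivity) hAle 2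
      _ ≤ (∑ i, ∑ j, w i j * (g i - g j) ^ 2) * (4 * ∑ i, wdeg w i * g i ^ 2) :=
        sq_sum_mul_abs_sq_sub_sq_le hw hsymm g
      _ ≤ 2 * (l * M) * (4 * (tauMax w μ * M)) := by
        refine mul_le_mul hl ?_ ?_ ((sum_sum_mul_sq_nonneg hw fun i j ↦ g i - g j).trans hl)
        · linarith [sum_wdeg_mul_le (w := w) hμ fun i ↦ sq_nonneg (g i)]
        · rw [← sum_sum_mul_eq_sum_wdeg_mul]
          linarith [sum_sum_mul_sq_nonneg hw fun i _ ↦ g i]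
      _ = (2 * M) ^ 2 * (2 * tauMax w μ * l) := by ring
  exact Real.le_sqrt_of_sq_le (le_of_mul_le_mul_left hsq (by positivity))

end Conductance

/-- A rooted forest on the vertex set `V`, encoded by its parent map. The roots are the fixed points
of `parent`. -/
structure RootedForest (V : Type*) where
  /-- The parent of a vertex, which is the vertex itself at a root. -/
  parent : V → V
  /-- A height function witnessing that iterating `parent` ends at a root. -/
  depth : V → ℕ
  depth_parent_lt : ∀ v, parent v ≠ v → depth (parent v) < depth v

namespace RootedForest

section Basic

variable {V : Type*} (F : RootedForest V)

lemma induction {C : V → Prop} (h : ∀ v, (F.parent v ≠ v → C (F.parent v)) → C v) (v : V) : C v :=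
  h v fun _ ↦ induction h (F.parent v)
termination_by F.depth v
decreasing_by exact F.depth_parent_lt v ‹_›

lemma eq_of_parent_eq_of_parent_eq {i j : V} (hi : F.parent i = j) (hj : F.parent j = i) :
    i = j := by
  by_contra hij
  have h₁ := F.depth_parent_lt i (by rw [hi]; exact Ne.symm hij)
  have h₂ := F.depth_parent_lt j (by rwa [hj])
  rw [hi] at h₁
  rw [hj] at h₂
  exact lt_asymm h₁ h₂

lemma exists_of_isTree {G : SimpleGraph V} (hG : G.IsTree) :
    ∃ F : RootedForest V, ∀ i j, G.Adj i j → F.parent i = j ∨ F.parent j = i := by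
  obtain ⟨r⟩ := hG.connected.nonempty
  choose p hp hlen using fun v ↦ (hG.connected v r).exists_path_of_dist
  refine ⟨⟨fun v ↦ (p v).snd, fun v ↦ G.dist v r, fun v hv ↦ ?_⟩, fun i j hij ↦ ?_⟩
  · have hnil : ¬ (p v).Nil := fun h ↦ hv <| ((p v).getVert_of_length_le <| by
      simp [SimpleGraph.Walk.length_eq_zero_iff.mpr h]).trans h.eq.symm
    calc G.dist (p v).snd r < (p v).tail.length + 1 :=
          Nat.lt_succ_of_le (SimpleGraph.dist_le (p v).tail)
      _ = G.dist v r := ((p v).length_tail_add_one hnil).trans (hlen v)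
  · by_cases hj : j ∈ (p i).support
    · exact .inl (hG.isAcyclic.eq_snd_of_adj_start (hp i) hij hj).symm
    · refine .inr (hG.isAcyclic.eq_snd_of_adj_start (hp j) hij.symm ?_).symm
      simpa using hG.isAcyclic.mem_support_of_ne_mem_support_of_adj_of_isPath
        (hp j).reverse (hp i).reverse hij.symm (by simpa using hj)

lemma exists_of_isAcyclic {G : SimpleGraph V} (hG : G.IsAcyclic) :
    ∃ F : RootedForest V, ∀ i j, G.Adj i j → F.parent i = j ∨ F.parent j = i := by
  cases isEmpty_or_nonempty V
  · exact ⟨⟨id, 0, isEmptyElim⟩, isEmptyElim⟩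
  · obtain ⟨T, hGT, -, hT⟩ := SimpleGraph.connected_top.exists_isTree_le_of_le_of_isAcyclic
      (le_top : G ≤ ⊤) hG
    obtain ⟨F, hF⟩ := exists_of_isTree hT
    exact ⟨F, fun i j hij ↦ hF i j (hGT hij)⟩

end Basic

section Elimination

variable {V : Type*} [Fintype V] [DecidableEq V] (F : RootedForest V) (a b : V → ℝ)

/-- The children of a vertex. A root, although its own parent, is not a child of itself. -/
def children (v : V) : Finset V := {c | F.parent c = v ∧ c ≠ v}

lemma depth_lt_of_mem_children {v c : V} (hc : c ∈ F.children v) : F.depth v < F.depth c := by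
  obtain ⟨rfl, hne⟩ : F.parent c = v ∧ c ≠ v := by simpa [children] using hc
  exact F.depth_parent_lt c hne.symm

/-- The quadratic form on functions on the vertices of a forest with diagonal coefficients `a` and
coefficient `-b v` at the edge joining `v` to its parent. -/
def form (f : V → ℝ) : ℝ :=
  ∑ v, a v * f v ^ 2 - 2 * ∑ v, b v * f v * f (F.parent v)

/-- The pivot at `v` of the Gaussian elimination of `F.form a b` from the leaves to the roots,
in which only the vertices with positive pivot are eliminated. -/
noncomputable def pivot (v : V) : ℝ :=
  a v - ∑ c ∈ (F.children v).attach, if 0 < pivot c then b c ^ 2 / pivot c else 0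
termination_by Finset.univ.sup F.depth - F.depth v
decreasing_by
  all_goals
    have := F.depth_lt_of_mem_children c.2
    have := Finset.le_sup (f := F.depth) (Finset.mem_univ c.1)
    omega

lemma pivot_add_sum_children (v : V) :
    F.pivot a b v + ∑ c ∈ F.children v,
      (if 0 < F.pivot a b c then b c ^ 2 / F.pivot a b c else 0) = a v := by
  rw [pivot, Finset.sum_attach (F.children v)
    fun c ↦ if 0 < F.pivot a b c then b c ^ 2 / F.pivot a b c else 0]
  ring

variable {a b}

/-- Completing the square at every vertex with positive pivot. -/
lemma form_eq_sum (hb : ∀ v, F.parent v = v → b v = 0) (f : V → ℝ) :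
    F.form a b f = ∑ v, if 0 < F.pivot a b v
      then F.pivot a b v * (f v - b v * f (F.parent v) / F.pivot a b v) ^ 2
      else F.pivot a b v * f v ^ 2 - 2 * (b v * f v * f (F.parent v)) := by
  set d := F.pivot a b
  have sum_children : ∑ v, ∑ c ∈ F.children v, (if 0 < d c then b c ^ 2 / d c else 0) * f v ^ 2 =
      ∑ c, (if 0 < d c then b c ^ 2 / d c else 0) * f (F.parent c) ^ 2 := by
    simp_rw [children, Finset.sum_filter]
    rw [Finset.sum_comm]
    refine Finset.sum_congr rfl fun c _ ↦ ?_
    by_cases hc : F.parent c = c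
    · simp [hb c hc, hc]
    · rw [Finset.sum_eq_single_of_mem (F.parent c) (Finset.mem_univ _) fun v _ hv ↦
        if_neg fun h ↦ hv h.1.symm, if_pos ⟨rfl, Ne.symm hc⟩]
  have sum_diag : ∑ v, a v * f v ^ 2 =
      ∑ v, d v * f v ^ 2 + ∑ c, (if 0 < d c then b c ^ 2 / d c else 0) * f (F.parent c) ^ 2 := by
    simp_rw [← sum_children, ← Finset.sum_mul, ← Finset.sum_add_distrib, ← add_mul, d,
      pivot_add_sum_children]
  rw [form, sum_diag, Finset.mul_sum, ← Finset.sum_add_distrib, ← Finset.sum_sub_distrib]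
  refine Finset.sum_congr rfl fun v _ ↦ ?_
  split_ifs with hv
  · field_simp
    ring
  · ring

lemma eq_zero_of_form_nonpos (hb : ∀ v, F.parent v = v → b v = 0) {f : V → ℝ}
    (hf : ∀ v, F.pivot a b v ≤ 0 → f v = 0) (hform : F.form a b f ≤ 0) : f = 0 := by
  rw [F.form_eq_sum hb] at hform
  have term_nonneg (v : V) : 0 ≤ if 0 < F.pivot a b v
      then F.pivot a b v * (f v - b v * f (F.parent v) / F.pivot a b v) ^ 2
      else F.pivot a b v * f v ^ 2 - 2 * (b v * f v * f (F.parent v)) := by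
    split_ifs with hv
    · positivity
    · simp [hf v (not_lt.mp hv)]
  have term_eq_zero := (Finset.sum_eq_zero_iff_of_nonneg fun v _ ↦ term_nonneg v).mp
    (hform.antisymm (Finset.sum_nonneg fun v _ ↦ term_nonneg v))
  ext v
  induction v using F.induction with
  | h v ih =>
    rcases le_or_gt (F.pivot a b v) 0 with hv | hv
    · exact hf v hv
    have hsq := term_eq_zero v (Finset.mem_univ v)
    rw [if_pos hv, mul_eq_zero_iff_left hv.ne', sq_eq_zero_iff, sub_eq_zero] at hsq
    have hparent : b v * f (F.parent v) = 0 := by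
      by_cases h : F.parent v = v
      · rw [hb v h, zero_mul]
      · rw [ih h, Pi.zero_apply, mul_zero]
    rw [hsq, hparent, zero_div, Pi.zero_apply]

variable (a b)

/-- The function that is `1` at `v` and vanishes at the other vertices with nonpositive pivot, and
whose value at a vertex with positive pivot makes the square in `form_eq_sum` vanish. It is
supported on descendants of `v`. -/
noncomputable def bump (v u : V) : ℝ :=
  if u = v then 1
  else if _ : F.pivot a b u ≤ 0 ∨ F.parent u = u then 0
  else b u * bump v (F.parent u) / F.pivot a b u
termination_by F.depth u
decreasing_by exact F.depth_parent_lt u (not_or.mp ‹_›).2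

lemma bump_ne_zero (v : V) : F.bump a b v ≠ 0 := by
  have hv : F.bump a b v v = 1 := by rw [bump, if_pos rfl]
  exact fun h ↦ one_ne_zero (hv.symm.trans (congrFun h v))

variable {a b}

lemma bump_of_pivot_nonpos {u v : V} (huv : u ≠ v) (hu : F.pivot a b u ≤ 0) :
    F.bump a b v u = 0 := by
  rw [bump, if_neg huv, dif_pos (.inl hu)]

lemma bump_of_pivot_pos (hb : ∀ v, F.parent v = v → b v = 0) {u v : V} (huv : u ≠ v)
    (hu : 0 < F.pivot a b u) :
    F.bump a b v u = b u * F.bump a b v (F.parent u) / F.pivot a b u := by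
  by_cases h : F.parent u = u
  · rw [bump, if_neg huv, dif_pos (.inr h), hb u h, zero_mul, zero_div]
  · rw [bump, if_neg huv, dif_neg (not_or.mpr ⟨hu.not_ge, h⟩)]

lemma bump_nonneg (hb : ∀ v, 0 ≤ b v) (v u : V) : 0 ≤ F.bump a b v u := by
  induction u using F.induction with
  | h u ih =>
    rw [bump]
    split_ifs with huv hu
    · exact zero_le_one
    · exact le_rfl
    · rw [not_or, not_le] at hu
      exact div_nonneg (mul_nonneg (hb u) (ih hu.2)) hu.1.le

lemma bump_eq_zero_or_bump_eq_zero (hb : ∀ v, F.parent v = v → b v = 0) {v v' : V} (hne : v ≠ v')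
    (hv : F.pivot a b v ≤ 0) (hv' : F.pivot a b v' ≤ 0) (u : V) :
    F.bump a b v u = 0 ∨ F.bump a b v' u = 0 := by
  induction u using F.induction with
  | h u ih =>
    by_cases huv : u = v
    · exact .inr (F.bump_of_pivot_nonpos (huv ▸ hne) (huv ▸ hv))
    by_cases huv' : u = v'
    · exact .inl (F.bump_of_pivot_nonpos huv (huv' ▸ hv'))
    rcases le_or_gt (F.pivot a b u) 0 with hu | hu
    · exact .inl (F.bump_of_pivot_nonpos huv hu)
    rw [F.bump_of_pivot_pos hb huv hu, F.bump_of_pivot_pos hb huv' hu]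
    by_cases hroot : F.parent u = u
    · simp [hb u hroot]
    · exact (ih hroot).imp (fun h ↦ by simp [h]) (fun h ↦ by simp [h])

lemma form_bump_nonpos (hb : ∀ v, F.parent v = v → b v = 0) (hb₀ : ∀ v, 0 ≤ b v) {v : V}
    (hv : F.pivot a b v ≤ 0) : F.form a b (F.bump a b v) ≤ 0 := by
  rw [F.form_eq_sum hb]
  refine Finset.sum_nonpos fun u _ ↦ ?_
  split_ifs with hu
  · rw [← F.bump_of_pivot_pos hb (ne_of_apply_ne (F.pivot a b) (hv.trans_lt hu).ne') hu]
    simp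
  · have hcross : 0 ≤ b u * F.bump a b v u * F.bump a b v (F.parent u) :=
      mul_nonneg (mul_nonneg (hb₀ u) (F.bump_nonneg hb₀ v u)) (F.bump_nonneg hb₀ v _)
    linarith [mul_nonpos_of_nonpos_of_nonneg (not_lt.mp hu) (sq_nonneg (F.bump a b v u))]

end Elimination

end RootedForest

section Spectrum

lemma card_filter_eq_of_prod_X_sub_C_eq {R ι ι' : Type*} [CommRing R] [IsDomain R] [Fintype ι]
    [Fintype ι'] {x : ι → R} {y : ι' → R} (h : ∏ i, (X - C (x i)) = ∏ j, (X - C (y j)))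
    (P : R → Prop) [DecidablePred P] :
    Finset.card {i | P (x i)} = Finset.card {j | P (y j)} := by
  have hroots : Finset.univ.val.map x = Finset.univ.val.map y := by
    simpa [Polynomial.roots_prod, Finset.prod_ne_zero_iff, X_sub_C_ne_zero] using
      congrArg Polynomial.roots h
  have hcount := congrArg (Multiset.countP P) hroots
  rwa [Multiset.countP_map, Multiset.countP_map] at hcount

lemma mulVec_dotProduct_mulVec_mulVec {R m n : Type*} [CommSemiring R] [Fintype m] [Fintype n]
    (B : Matrix m n R) (M : Matrix m m R) (x : n → R) :
    B *ᵥ x ⬝ᵥ M *ᵥ B *ᵥ x = x ⬝ᵥ (Bᵀ * M * B) *ᵥ x := by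
  rw [dotProduct_comm, Matrix.dotProduct_mulVec, ← Matrix.mulVec_transpose, dotProduct_comm,
    Matrix.mulVec_mulVec, Matrix.mulVec_mulVec, Matrix.mul_assoc]

variable {V : Type*} [Fintype V] [DecidableEq V]

lemma card_eigenvalues_le_le_card {N : Matrix V V ℝ} (hN : N.IsHermitian) (S : Finset V) (l : ℝ)
    (hS : ∀ x : V → ℝ, (∀ v ∈ S, x v = 0) → x ⬝ᵥ N *ᵥ x ≤ l * (x ⬝ᵥ x) → x = 0) :
    Finset.card {i | hN.eigenvalues i ≤ l} ≤ S.card := by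
  let e := hN.eigenvalues
  let U : Matrix V V ℝ := hN.eigenvectorUnitary
  have hU : Uᵀ * U = 1 := Matrix.mem_unitaryGroup_iff'.mp hN.eigenvectorUnitary.2
  have norm_mulVec (c : V → ℝ) : U *ᵥ c ⬝ᵥ U *ᵥ c = ∑ i, c i ^ 2 := by
    simpa [hU, dotProduct, ← sq] using mulVec_dotProduct_mulVec_mulVec U 1 c
  have form_mulVec (c : V → ℝ) : U *ᵥ c ⬝ᵥ N *ᵥ U *ᵥ c = ∑ i, e i * c i ^ 2 := by
    have hdiag : Uᵀ * N * U = Matrix.diagonal e := by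
      have := hN.conjStarAlgAut_star_eigenvectorUnitary
      rwa [Unitary.conjStarAlgAut_star_apply] at this
    simp_rw [mulVec_dotProduct_mulVec_mulVec, hdiag, dotProduct, Matrix.mulVec_diagonal, sq,
      mul_left_comm]
  let I : Finset V := {i | e i ≤ l}
  let T : (I → ℝ) →ₗ[ℝ] (S → ℝ) :=
    LinearMap.funLeft ℝ ℝ (Subtype.val : S → V) ∘ₗ U.mulVecLin ∘ₗ
      Function.ExtendByZero.linearMap ℝ (Subtype.val : I → V)
  suffices hT : Function.Injective T by
    simpa using LinearMap.finrank_le_finrank_of_injective hT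
  refine (injective_iff_map_eq_zero T).mpr fun c hc ↦ ?_
  set c' : V → ℝ := Function.extend Subtype.val c 0
  have hx : U *ᵥ c' = 0 := by
    refine hS _ (fun v hv ↦ congrFun hc ⟨v, hv⟩) ?_
    rw [form_mulVec, norm_mulVec, Finset.mul_sum]
    refine Finset.sum_le_sum fun i _ ↦ ?_
    by_cases hi : e i ≤ l
    · gcongr
    · simp [c', Function.extend_apply', I, hi]
  have hc' : c' = 0 := by
    rw [← Matrix.one_mulVec c', ← hU, ← Matrix.mulVec_mulVec, hx, Matrix.mulVec_zero]
  ext i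
  simpa [c', Subtype.val_injective.extend_apply] using congrFun hc' i

lemma card_filter_le_card_of_charpoly_eq {ι : Type*} [Fintype ι] {L : Matrix V V ℝ}
    (hL : L.IsSymm) {μ : V → ℝ} (hμ : ∀ i, 0 < μ i) {lam : ι → ℝ}
    (hchar : ((Matrix.diagonal μ)⁻¹ * L).charpoly = ∏ i, (X - C (lam i))) (S : Finset V) (l : ℝ)
    (hS : ∀ f : V → ℝ, (∀ v ∈ S, f v = 0) → f ⬝ᵥ L *ᵥ f ≤ l * ∑ i, μ i * f i ^ 2 → f = 0) :
    Finset.card {i | lam i ≤ l} ≤ S.card := by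
  let s : V → ℝ := fun i ↦ (√(μ i))⁻¹
  have hs (i : V) : 0 < s i := by have := hμ i; positivity
  have hμs (i : V) : μ i * s i ^ 2 = 1 := by
    rw [inv_pow, Real.sq_sqrt (hμ i).le, mul_inv_cancel₀ (hμ i).ne']
  let N : Matrix V V ℝ := Matrix.diagonal s * L * Matrix.diagonal s
  have hN : N.IsHermitian := by
    simp [N, Matrix.IsHermitian, Matrix.conjTranspose_eq_transpose_of_trivial, hL.eq,
      Matrix.mul_assoc]
  have hcharN : N.charpoly = ((Matrix.diagonal μ)⁻¹ * L).charpoly := by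
    have hinv : (Matrix.diagonal μ)⁻¹ = Matrix.diagonal s * Matrix.diagonal s := by
      refine Matrix.inv_eq_right_inv ?_
      rw [Matrix.diagonal_mul_diagonal, Matrix.diagonal_mul_diagonal, ← Matrix.diagonal_one]
      simp_rw [← sq, hμs]
    rw [hinv, Matrix.charpoly_mul_comm, Matrix.mul_assoc]
  rw [card_filter_eq_of_prod_X_sub_C_eq
    (hchar.symm.trans (hcharN.symm.trans hN.charpoly_eq)) (· ≤ l)]
  refine card_eigenvalues_le_le_card hN S l fun x hxS hx ↦ ?_
  have hform : (s * x) ⬝ᵥ L *ᵥ (s * x) = x ⬝ᵥ N *ᵥ x := by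
    have hsx : s * x = Matrix.diagonal s *ᵥ x := by
      ext i
      rw [Matrix.mulVec_diagonal, Pi.mul_apply]
    rw [hsx, mulVec_dotProduct_mulVec_mulVec, Matrix.diagonal_transpose]
  have hnorm : ∑ i, μ i * (s * x) i ^ 2 = x ⬝ᵥ x := by
    simp [mul_pow, ← mul_assoc, hμs, dotProduct, ← sq]
  have hsx : s * x = 0 := hS _ (fun v hv ↦ by simp [hxS v hv]) (by rwa [hform, hnorm])
  ext i
  simpa [(hs i).ne'] using congrFun hsx i

end Spectrum

section Laplacian

variable {V : Type*} [Fintype V]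

lemma RootedForest.sum_sum_mul_mul_eq (F : RootedForest V) {w : V → V → ℝ}
    (hsymm : ∀ i j, w i j = w j i) (hdiag : ∀ i, w i i = 0)
    (hF : ∀ i j, w i j ≠ 0 → F.parent i = j ∨ F.parent j = i) (f : V → ℝ) :
    ∑ i, ∑ j, w i j * (f i * f j) = 2 * ∑ v, w v (F.parent v) * f v * f (F.parent v) := by
  classical
  have hsplit (i j : V) : w i j * (f i * f j) =
      (if F.parent i = j then w i j * f i * f j else 0) +
        (if F.parent j = i then w j i * f j * f i else 0) := by
    by_cases hij : w i j = 0
    · simp [hij, hsymm j i]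
    by_cases hi : F.parent i = j
    · have hj : F.parent j ≠ i := by
        intro hj
        obtain rfl := F.eq_of_parent_eq_of_parent_eq hi hj
        exact hij (hdiag i)
      rw [if_pos hi, if_neg hj, add_zero, mul_assoc]
    · rw [if_neg hi, if_pos ((hF i j hij).resolve_left hi), hsymm j i]
      ring
  simp_rw [hsplit, Finset.sum_add_distrib]
  rw [Finset.sum_comm (f := fun i j ↦ if F.parent j = i then w j i * f j * f i else 0), ← two_mul]
  simp

variable [DecidableEq V]

/-- The unnormalized Laplacian `L = D + K - A`, so that `normLap w μ κ` is `M⁻¹ L`. -/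
noncomputable def laplacian (w : V → V → ℝ) (κ : V → ℝ) : Matrix V V ℝ :=
  Matrix.diagonal (wdeg w) + Matrix.diagonal κ - Matrix.of w

lemma laplacian_isSymm {w : V → V → ℝ} (hsymm : ∀ i j, w i j = w j i) (κ : V → ℝ) :
    (laplacian w κ).IsSymm := by
  have hw : (Matrix.of w)ᵀ = Matrix.of w := Matrix.ext fun i j ↦ hsymm j i
  rw [Matrix.IsSymm, laplacian, Matrix.transpose_sub, Matrix.transpose_add,
    Matrix.diagonal_transpose, Matrix.diagonal_transpose, hw]

lemma dotProduct_laplacian_mulVec (w : V → V → ℝ) (κ f : V → ℝ) :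
    f ⬝ᵥ laplacian w κ *ᵥ f =
      ∑ i, (wdeg w i + κ i) * f i ^ 2 - ∑ i, ∑ j, w i j * (f i * f j) := by
  rw [laplacian, Matrix.diagonal_add, Matrix.sub_mulVec, dotProduct_sub]
  congr 1
  · simp_rw [dotProduct, Matrix.mulVec_diagonal, sq, mul_left_comm]
  · simp_rw [dotProduct, Matrix.mulVec, dotProduct, Matrix.of_apply, Finset.mul_sum, mul_left_comm]

lemma two_mul_dotProduct_laplacian_mulVec {w : V → V → ℝ} (hsymm : ∀ i j, w i j = w j i)
    (κ f : V → ℝ) :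
    2 * (f ⬝ᵥ laplacian w κ *ᵥ f) =
      ∑ i, ∑ j, w i j * (f i - f j) ^ 2 + 2 * ∑ i, κ i * f i ^ 2 := by
  have hexpand : ∑ i, ∑ j, w i j * (f i - f j) ^ 2 = ∑ i, ∑ j, w i j * f i ^ 2 +
      ∑ i, ∑ j, w i j * f j ^ 2 - 2 * ∑ i, ∑ j, w i j * (f i * f j) := by
    simp_rw [Finset.mul_sum, ← Finset.sum_add_distrib, ← Finset.sum_sub_distrib]
    exact Finset.sum_congr rfl fun i _ ↦ Finset.sum_congr rfl fun j _ ↦ by ring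
  rw [hexpand, sum_sum_mul_eq_sum_wdeg_mul w (f · ^ 2),
    sum_sum_mul_eq_sum_wdeg_mul_of_symm hsymm (f · ^ 2), dotProduct_laplacian_mulVec]
  simp_rw [add_mul, Finset.sum_add_distrib]
  ring

lemma exists_conductance_le_sqrt_of_dotProduct_laplacian_mulVec_le {w : V → V → ℝ}
    (hw : ∀ i j, 0 ≤ w i j) (hsymm : ∀ i j, w i j = w j i) {μ : V → ℝ} (hμ : ∀ i, 0 < μ i)
    {κ : V → ℝ} (hκ : ∀ i, 0 ≤ κ i) {g : V → ℝ} (hg : g ≠ 0) {l : ℝ}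
    (hl : g ⬝ᵥ laplacian w κ *ᵥ g ≤ l * ∑ i, μ i * g i ^ 2) :
    ∃ A : Finset V, A.Nonempty ∧ (∀ i ∈ A, g i ≠ 0) ∧
      conductance w μ A ≤ √(2 * tauMax w μ * l) := by
  refine exists_conductance_le_sqrt_of_sum_mul_sq_sub_le hw hsymm hμ hg ?_
  have hpotential : 0 ≤ ∑ i, κ i * g i ^ 2 :=
    Finset.sum_nonneg fun i _ ↦ mul_nonneg (hκ i) (sq_nonneg _)
  linarith [two_mul_dotProduct_laplacian_mulVec hsymm κ g]

lemma RootedForest.form_eq_dotProduct_laplacian_mulVec_sub (F : RootedForest V)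
    {w : V → V → ℝ} (hsymm : ∀ i j, w i j = w j i) (hdiag : ∀ i, w i i = 0)
    (hF : ∀ i j, w i j ≠ 0 → F.parent i = j ∨ F.parent j = i) (κ μ : V → ℝ) (l : ℝ) (f : V → ℝ) :
    F.form (fun v ↦ wdeg w v + κ v - l * μ v) (fun v ↦ w v (F.parent v)) f =
      f ⬝ᵥ laplacian w κ *ᵥ f - l * ∑ i, μ i * f i ^ 2 := by
  rw [form, dotProduct_laplacian_mulVec, F.sum_sum_mul_mul_eq hsymm hdiag hF]
  simp_rw [sub_mul, Finset.sum_sub_distrib, mul_assoc, ← Finset.mul_sum]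
  exact sub_right_comm _ _ _

lemma RootedForest.exists_disjoint_support_dotProduct_laplacian_mulVec_le (F : RootedForest V)
    {w : V → V → ℝ} (hsymm : ∀ i j, w i j = w j i) (hw : ∀ i j, 0 ≤ w i j) (hdiag : ∀ i, w i i = 0)
    (hF : ∀ i j, w i j ≠ 0 → F.parent i = j ∨ F.parent j = i) {μ : V → ℝ} (hμ : ∀ i, 0 < μ i)
    {κ : V → ℝ} {ι : Type*} [Fintype ι] {lam : ι → ℝ}
    (hchar : (normLap w μ κ).charpoly = ∏ i, (X - C (lam i))) (l : ℝ) :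
    ∃ g : {i // lam i ≤ l} → V → ℝ, (∀ i, g i ≠ 0) ∧
      (∀ i j, i ≠ j → ∀ v, g i v = 0 ∨ g j v = 0) ∧
      ∀ i, g i ⬝ᵥ laplacian w κ *ᵥ g i ≤ l * ∑ v, μ v * g i v ^ 2 := by
  let a (v : V) : ℝ := wdeg w v + κ v - l * μ v
  let b (v : V) : ℝ := w v (F.parent v)
  have hb (v : V) (hv : F.parent v = v) : b v = 0 := (congrArg (w v) hv).trans (hdiag v)
  have hform (f : V → ℝ) : F.form a b f = f ⬝ᵥ laplacian w κ *ᵥ f - l * ∑ i, μ i * f i ^ 2 :=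
    F.form_eq_dotProduct_laplacian_mulVec_sub hsymm hdiag hF κ μ l f
  let S : Finset V := {v | F.pivot a b v ≤ 0}
  have hS (v : V) : v ∈ S ↔ F.pivot a b v ≤ 0 := Finset.mem_filter_univ v
  have hcard : Finset.card {i | lam i ≤ l} ≤ S.card :=
    card_filter_le_card_of_charpoly_eq (laplacian_isSymm hsymm κ) hμ hchar S l fun f hfS hf ↦
      F.eq_zero_of_form_nonpos hb (fun v hv ↦ hfS v ((hS v).mpr hv))
        ((hform f).trans_le (sub_nonpos.mpr hf))
  obtain ⟨e⟩ : Nonempty ({i // lam i ≤ l} ↪ S) :=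
    Function.Embedding.nonempty_of_card_le (by simpa [Fintype.card_subtype] using hcard)
  have he (i) : F.pivot a b (e i) ≤ 0 := (hS _).mp (e i).2
  refine ⟨fun i ↦ F.bump a b (e i), fun i ↦ F.bump_ne_zero a b (e i), fun i j hij ↦ ?_, fun i ↦ ?_⟩
  · have hne : (e i : V) ≠ e j := Subtype.coe_injective.ne (e.injective.ne hij)
    exact F.bump_eq_zero_or_bump_eq_zero hb hne (he i) (he j)
  · rw [← sub_nonpos, ← hform]
    exact F.form_bump_nonpos hb (fun v ↦ hw v _) (he i)

end Laplacian

theorem multiway_cheeger_tree_general {V : Type*} [Fintype V] [DecidableEq V] {n : ℕ}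
    {G : SimpleGraph V} (hG : G.IsAcyclic) {w : V → V → ℝ} (hsymm : ∀ i j, w i j = w j i)
    (hw : ∀ i j, 0 ≤ w i j) (hzero : ∀ i j, ¬ G.Adj i j → w i j = 0)
    {μ : V → ℝ} (hμ : ∀ i, 0 < μ i) {κ : V → ℝ} (hκ : ∀ i, 0 ≤ κ i)
    {lam : Fin n → ℝ} (hmono : Monotone lam)
    (hchar : (normLap w μ κ).charpoly = ∏ i, (X - C (lam i))) (k : Fin n) :
    cheeger (k + 1) w μ ≤ √(2 * tauMax w μ * lam k) := by
  obtain ⟨F, hF⟩ := RootedForest.exists_of_isAcyclic hG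
  obtain ⟨g, hg, hdisj, hle⟩ := F.exists_disjoint_support_dotProduct_laplacian_mulVec_le hsymm hw
    (fun i ↦ hzero i i G.irrefl) (fun i j hij ↦ hF i j (not_imp_comm.mp (hzero i j) hij)) hμ hchar
    (lam k)
  choose A hne hsupp hcond using fun i ↦
    exists_conductance_le_sqrt_of_dotProduct_laplacian_mulVec_le hw hsymm hμ hκ (hg i) (hle i)
  let e (i : Fin (k + 1)) : {i // lam i ≤ lam k} :=
    ⟨Fin.castLE k.isLt i, hmono (Nat.le_of_lt_succ i.isLt)⟩
  refine cheeger_le_of_forall_conductance_le hw (fun i ↦ (hμ i).le) (fun i ↦ hne (e i))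
    (fun i j hij ↦ Finset.disjoint_left.mpr fun v hi hj ↦ ?_) (Real.sqrt_nonneg _)
    fun i ↦ hcond (e i)
  have he : e i ≠ e j := fun h ↦ hij (Fin.castLE_injective k.isLt (congrArg Subtype.val h))
  exact (hdisj _ _ he v).elim (hsupp _ v hi) (hsupp _ v hj)

/-- **Miclo's higher-order Cheeger inequality on trees.** For a finite weighted tree
(connected with `|E| = |V| - 1`) with nonnegative potential, for every `1 ≤ k ≤ n` one has
`ρ_k(G) ≤ √(2 τ_G λ_k(G))`. -/
theorem multiway_cheeger_tree (n : ℕ) (G : SimpleGraph (Fin n)) [DecidableRel G.Adj]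
    (hconn : G.Connected) (htree : G.edgeFinset.card = n - 1)
    (w : Fin n → Fin n → ℝ) (hsymm : ∀ i j, w i j = w j i)
    (hpos : ∀ i j, G.Adj i j → 0 < w i j) (hzero : ∀ i j, ¬ G.Adj i j → w i j = 0)
    (μ : Fin n → ℝ) (hμ : ∀ i, 0 < μ i)
    (κ : Fin n → ℝ) (hκ : ∀ i, 0 ≤ κ i)
    (lam : Fin n → ℝ) (hmono : Monotone lam)
    (hchar : (normLap w μ κ).charpoly = ∏ i, (X - C (lam i)))
    (k : ℕ) (hk1 : 1 ≤ k) (hk2 : k ≤ n) :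
    cheeger k w μ ≤ Real.sqrt (2 * tauMax w μ * lam ⟨k - 1, by omega⟩) := by
  obtain ⟨k, rfl⟩ := Nat.exists_eq_add_of_le' hk1
  have hG : G.IsTree := SimpleGraph.isTree_iff_connected_and_card.mpr ⟨hconn, by
    rw [Nat.card_fin, ← SimpleGraph.coe_edgeFinset, Nat.card_coe_set_eq, Set.ncard_coe_finset]
    omega⟩
  have hw (i j : Fin n) : 0 ≤ w i j := by
    by_cases hij : G.Adj i j
    · exact (hpos i j hij).le
    · exact (hzero i j hij).ge
  exact multiway_cheeger_tree_general hG.isAcyclic hsymm hw hzero hμ hκ hmono hchar ⟨k, hk2⟩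
end

section
/- Let G = (V,E,w,μ) be a finite weighted graph with |V| ≥ 3 and zero potential. Then for every 1 ≤ k ≤ n, the k-way Cheeger constant satisfies ρ_k(G) ≥ (τ_min − η)(1 − 1/k), where τ_min = min_{i∈V} d(i)/μ_i, and η = max{|η_2|, |η_n|} with η_1 ≥ η_2 ≥ … ≥ η_n the eigenvalues of the normalized adjacency matrix 𝒜 = M^{−1}A listed in descending order. -/
open BigOperators Matrix Polynomial

/-!
The normalized indicators of disjoint vertex sets are orthonormal in `ℓ²(V, μ)`, and the Laplacian
`L = D - W` takes the conductances as its values on them. If at most one eigenvalue of `M⁻¹W`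
exceeds `e`, then `W ≤ e M` on the hyperplane orthogonal to its eigenvector; since `D ≥ τ_min M`,
there `L ≥ (τ_min - e) M`, while `L ≥ 0` everywhere. A `k`-dimensional space meets the hyperplane in
dimension at least `k - 1`, so the trace of `L` on the span of `k` orthonormal vectors is at least
`(k - 1)(τ_min - e)`, and the largest of the `k` conductances is at least their average.
-/

open Finset

section KyFan

variable {ι : Type*} [Fintype ι]

lemma sum_apply_sub_smul_self {R E : Type*} [CommRing R] [AddCommGroup E] [Module R E]
    (B : LinearMap.BilinForm R E) (u : ι → E) {c : ι → R} (hc : ∑ i, c i ^ 2 = 1) {p : E}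
    (hp : ∑ i, c i • u i = p) :
    ∑ i, B (u i - c i • p) (u i - c i • p) = ∑ i, B (u i) (u i) - B p p := by
  have hleft : ∑ i, c i * B (u i) p = B p p := by
    simpa using congrArg (B · p) hp
  have hright : ∑ i, c i * B p (u i) = B p p := by
    simpa using congrArg (B p ·) hp
  have hterm (i) : B (u i - c i • p) (u i - c i • p) =
      B (u i) (u i) - c i * B (u i) p - c i * B p (u i) + c i ^ 2 * B p p := by
    simp only [map_sub, map_smul, LinearMap.sub_apply, LinearMap.smul_apply, smul_eq_mul]
    ring
  simp only [hterm, sum_add_distrib, sum_sub_distrib, ← sum_mul, hleft, hright, hc]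
  ring

lemma exists_sum_sq_eq_one_and_eq_mul_sum [Nonempty ι] (a : ι → ℝ) :
    ∃ c : ι → ℝ, ∑ i, c i ^ 2 = 1 ∧ ∀ i, a i = c i * ∑ j, c j * a j := by
  classical
  rcases eq_or_ne a 0 with rfl | ha
  · exact ⟨Pi.single (Classical.arbitrary ι) 1, by simp [Pi.single_apply], by simp⟩
  obtain ⟨i₀, hi₀⟩ := Function.ne_iff.mp ha
  have hpos : 0 < ∑ i, a i ^ 2 :=
    sum_pos' (fun i _ => sq_nonneg _) ⟨i₀, mem_univ _, sq_pos_of_ne_zero hi₀⟩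
  have hsq : √(∑ i, a i ^ 2) ^ 2 = ∑ i, a i ^ 2 := Real.sq_sqrt hpos.le
  refine ⟨fun i => a i / √(∑ i, a i ^ 2), ?_, fun i => ?_⟩
  · simp only [div_pow, hsq, ← sum_div, div_self hpos.ne']
  · simp only [div_mul_eq_mul_div, ← sum_div, ← sq]
    rw [mul_div_assoc, div_div, ← sq, hsq, div_self hpos.ne', mul_one]

-- Subtracting from each `u i` its component along a suitable unit vector `p` of their span puts it
-- in `ker φ`; this lowers the trace of `N` by `1` and the trace of `L` by `L p p ≥ 0`.
theorem card_sub_one_mul_le_sum_apply_self {E : Type*} [AddCommGroup E] [Module ℝ E]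
    [Nonempty ι] [DecidableEq ι] {L N : LinearMap.BilinForm ℝ E} {φ : Module.Dual ℝ E} {t : ℝ}
    (hL : ∀ x, 0 ≤ L x x) (hLN : ∀ x, φ x = 0 → t * N x x ≤ L x x) {u : ι → E}
    (hu : ∀ i j, N (u i) (u j) = if i = j then 1 else 0) :
    ((Fintype.card ι : ℝ) - 1) * t ≤ ∑ i, L (u i) (u i) := by
  obtain ⟨c, hc, hφ⟩ := exists_sum_sq_eq_one_and_eq_mul_sum fun i => φ (u i)
  set p := ∑ i, c i • u i with hp
  have hker (i) : φ (u i - c i • p) = 0 := by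
    simp only [hp, map_sub, map_smul, map_sum, smul_eq_mul, ← hφ, sub_self]
  have hNp : N p p = 1 := by
    simp [hp, LinearMap.sum_apply, hu, ← sq, hc]
  calc ((Fintype.card ι : ℝ) - 1) * t
      = t * ∑ i, N (u i - c i • p) (u i - c i • p) := by
        rw [sum_apply_sub_smul_self N u hc hp.symm, hNp]
        simp [hu, mul_comm]
    _ ≤ ∑ i, L (u i - c i • p) (u i - c i • p) := by
        rw [mul_sum]
        exact sum_le_sum fun i _ => hLN _ (hker i)
    _ = ∑ i, L (u i) (u i) - L p p := sum_apply_sub_smul_self L u hc hp.symm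
    _ ≤ ∑ i, L (u i) (u i) := sub_le_self _ (hL p)

end KyFan

section Spectrum

lemma dotProduct_self_eq_sum_sq {V ι : Type*} [Fintype V] [Fintype ι]
    (b : OrthonormalBasis ι ℝ (EuclideanSpace ℝ V)) (x : V → ℝ) :
    x ⬝ᵥ x = ∑ j, (b j ⬝ᵥ x) ^ 2 := by
  have hparseval := b.sum_inner_mul_inner (WithLp.toLp 2 x) (WithLp.toLp 2 x)
  simp only [EuclideanSpace.inner_eq_star_dotProduct, star_trivial] at hparseval
  rw [← hparseval]
  exact sum_congr rfl fun j _ => by rw [dotProduct_comm x, sq]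

variable {V : Type*} [Fintype V] [DecidableEq V]

lemma toBilin'_self_eq_sum_eigenvalues {B : Matrix V V ℝ} (hB : B.IsHermitian) (x : V → ℝ) :
    toBilin' B x x = ∑ j, hB.eigenvalues j * (hB.eigenvectorBasis j ⬝ᵥ x) ^ 2 := by
  have hexpand := hB.eigenvectorBasis.sum_inner_mul_inner (WithLp.toLp 2 x)
    (WithLp.toLp 2 (B *ᵥ x))
  have htranspose : Bᵀ = B := by simpa [Matrix.IsHermitian] using hB
  have hcoord (j) : hB.eigenvectorBasis j ⬝ᵥ B *ᵥ x =
      hB.eigenvalues j * (hB.eigenvectorBasis j ⬝ᵥ x) := by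
    rw [dotProduct_mulVec, ← mulVec_transpose, htranspose, hB.mulVec_eigenvectorBasis,
      smul_dotProduct, smul_eq_mul]
  simp only [EuclideanSpace.inner_eq_star_dotProduct, star_trivial] at hexpand
  rw [toBilin'_apply', dotProduct_comm, ← hexpand]
  refine sum_congr rfl fun j _ => ?_
  rw [dotProduct_comm (B *ᵥ x), hcoord]
  ring

lemma exists_forall_ne_eigenvalues_le [Nonempty V] {B : Matrix V V ℝ} (hB : B.IsHermitian) {e : ℝ}
    (he : B.charpoly.roots.countP (e < ·) ≤ 1) : ∃ j₀, ∀ j ≠ j₀, hB.eigenvalues j ≤ e := by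
  rw [hB.roots_charpoly_eq_eigenvalues, Multiset.countP_map] at he
  have hcard : #{j | e < hB.eigenvalues j} ≤ 1 := he
  obtain ⟨j₀, hj₀⟩ := card_le_one_iff_subset_singleton.mp hcard
  exact ⟨j₀, fun j hj => not_lt.mp fun h => hj (by simpa using hj₀ (by simpa using h))⟩

lemma exists_dual_toBilin'_le_of_isHermitian [Nonempty V] {B : Matrix V V ℝ} (hB : B.IsHermitian)
    {e : ℝ} (he : B.charpoly.roots.countP (e < ·) ≤ 1) :
    ∃ φ : Module.Dual ℝ (V → ℝ), ∀ x, φ x = 0 → toBilin' B x x ≤ e * (x ⬝ᵥ x) := by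
  obtain ⟨j₀, hj₀⟩ := exists_forall_ne_eigenvalues_le hB he
  refine ⟨dotProductBilin ℝ ℝ (hB.eigenvectorBasis j₀).ofLp, fun x hx => ?_⟩
  rw [toBilin'_self_eq_sum_eigenvalues hB, dotProduct_self_eq_sum_sq hB.eigenvectorBasis, mul_sum]
  refine sum_le_sum fun j _ => ?_
  rcases eq_or_ne j j₀ with rfl | hj
  · simp [show hB.eigenvectorBasis j ⬝ᵥ x = 0 by simpa using hx]
  · exact mul_le_mul_of_nonneg_right (hj₀ j hj) (sq_nonneg _)

lemma charpoly_inv_mul_self_mul {K : Type*} [CommRing K] (R W : Matrix V V K) :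
    ((R * R)⁻¹ * W).charpoly = (R⁻¹ * W * R⁻¹).charpoly := by
  rw [Matrix.mul_inv_rev, mul_assoc, charpoly_mul_comm]

lemma toBilin'_mulVec_mulVec {K : Type*} [CommRing K] (M P : Matrix V V K) (x y : V → K) :
    toBilin' M (P *ᵥ x) (P *ᵥ y) = toBilin' (Pᵀ * M * P) x y :=
  LinearMap.congr_fun₂ (toBilin'_comp M P P) x y

theorem exists_dual_toBilin'_le [Nonempty V] {μ : V → ℝ} (hμ : ∀ i, 0 < μ i) {W : Matrix V V ℝ}
    (hW : W.IsSymm) {e : ℝ} (he : ((diagonal μ)⁻¹ * W).charpoly.roots.countP (e < ·) ≤ 1) :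
    ∃ φ : Module.Dual ℝ (V → ℝ), ∀ x, φ x = 0 →
      toBilin' W x x ≤ e * toBilin' (diagonal μ) x x := by
  set R : Matrix V V ℝ := diagonal fun i => √(μ i) with hR
  have hRR : R * R = diagonal μ := by simp [hR, Real.mul_self_sqrt (hμ _).le]
  have hRsymm : Rᵀ = R := diagonal_transpose _
  have hRunit : IsUnit R.det := by
    simpa [hR, det_diagonal, prod_ne_zero_iff] using fun i => (Real.sqrt_pos.mpr (hμ i)).ne'
  have hB : (R⁻¹ * W * R⁻¹).IsHermitian := by
    simp [Matrix.IsHermitian, transpose_nonsing_inv, hRsymm, hW.eq, mul_assoc]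
  have hRBR : R * (R⁻¹ * W * R⁻¹) * R = W := by
    rw [mul_assoc, nonsing_inv_mul_cancel_right _ _ hRunit, mul_nonsing_inv_cancel_left _ _ hRunit]
  rw [← hRR, charpoly_inv_mul_self_mul] at he
  obtain ⟨φ, hφ⟩ := exists_dual_toBilin'_le_of_isHermitian hB he
  refine ⟨φ ∘ₗ toLin' R, fun x hx => ?_⟩
  have hbound := hφ (R *ᵥ x) hx
  rw [toBilin'_mulVec_mulVec, hRsymm, hRBR] at hbound
  have hnorm : toBilin' (diagonal μ) x x = (R *ᵥ x) ⬝ᵥ (R *ᵥ x) := by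
    rw [← hRR, toBilin'_apply', ← mulVec_mulVec, dotProduct_mulVec, ← mulVec_transpose, hRsymm]
  rwa [hnorm]

end Spectrum

section Laplacian

variable {V : Type*} [Fintype V] [DecidableEq V] {w : V → V → ℝ} {μ : V → ℝ}

/-- The Laplacian `D - W` of the weights `w`, where `D` is the diagonal matrix of weighted degrees
`∑ j, w i j`; the vertex measure does not enter. -/
noncomputable def weightedLapMatrix (w : V → V → ℝ) : Matrix V V ℝ :=
  diagonal (fun i => ∑ j, w i j) - of w

lemma toBilin'_diagonal_self (d x : V → ℝ) : toBilin' (diagonal d) x x = ∑ i, d i * x i ^ 2 := by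
  rw [toBilin'_apply']
  simp only [dotProduct, mulVec_diagonal]
  exact sum_congr rfl fun i _ => by ring

lemma toBilin'_weightedLapMatrix_self (w : V → V → ℝ) (x : V → ℝ) :
    toBilin' (weightedLapMatrix w) x x = ∑ i, ∑ j, w i j * (x i * (x i - x j)) := by
  rw [weightedLapMatrix, map_sub, LinearMap.sub_apply, LinearMap.sub_apply, toBilin'_diagonal_self,
    toBilin'_apply, ← sum_sub_distrib]
  refine sum_congr rfl fun i _ => ?_
  rw [sum_mul, ← sum_sub_distrib]
  exact sum_congr rfl fun j _ => by rw [of_apply]; ring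

lemma two_mul_toBilin'_weightedLapMatrix_self (hsymm : ∀ i j, w i j = w j i) (x : V → ℝ) :
    2 * toBilin' (weightedLapMatrix w) x x = ∑ i, ∑ j, w i j * (x i - x j) ^ 2 := by
  have hswap : ∑ i, ∑ j, w i j * (x i * (x i - x j)) = ∑ i, ∑ j, w i j * (x j * (x j - x i)) := by
    rw [sum_comm]
    exact sum_congr rfl fun i _ => sum_congr rfl fun j _ => by rw [hsymm]
  rw [toBilin'_weightedLapMatrix_self, two_mul]
  nth_rw 2 [hswap]
  simp only [← sum_add_distrib]
  exact sum_congr rfl fun i _ => sum_congr rfl fun j _ => by ring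

lemma toBilin'_weightedLapMatrix_self_nonneg (hsymm : ∀ i j, w i j = w j i)
    (hw : ∀ i j, 0 ≤ w i j) (x : V → ℝ) : 0 ≤ toBilin' (weightedLapMatrix w) x x := by
  have henergy : 0 ≤ ∑ i, ∑ j, w i j * (x i - x j) ^ 2 :=
    sum_nonneg fun i _ => sum_nonneg fun j _ => mul_nonneg (hw i j) (sq_nonneg _)
  rw [← two_mul_toBilin'_weightedLapMatrix_self hsymm] at henergy
  linarith

lemma sub_mul_le_toBilin'_weightedLapMatrix {τ e : ℝ} (hτ : ∀ i, τ * μ i ≤ ∑ j, w i j) {x : V → ℝ}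
    (hx : toBilin' (of w) x x ≤ e * toBilin' (diagonal μ) x x) :
    (τ - e) * toBilin' (diagonal μ) x x ≤ toBilin' (weightedLapMatrix w) x x := by
  have hdeg : τ * toBilin' (diagonal μ) x x ≤ toBilin' (diagonal fun i => ∑ j, w i j) x x := by
    simp only [toBilin'_diagonal_self, mul_sum, ← mul_assoc]
    exact sum_le_sum fun i _ => mul_le_mul_of_nonneg_right (hτ i) (sq_nonneg _)
  rw [weightedLapMatrix, map_sub, LinearMap.sub_apply, LinearMap.sub_apply]
  linarith

/-- The indicator of `A` scaled to norm one in `ℓ²(V, μ)`; it is zero if `A` has measure zero. -/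
noncomputable def normalizedIndicator (μ : V → ℝ) (A : Finset V) : V → ℝ :=
  (√(∑ a ∈ A, μ a))⁻¹ • (A : Set V).indicator 1

lemma toBilin'_diagonal_normalizedIndicator_self {A : Finset V} (hA : 0 < ∑ a ∈ A, μ a) :
    toBilin' (diagonal μ) (normalizedIndicator μ A) (normalizedIndicator μ A) = 1 := by
  have hind : toBilin' (diagonal μ) ((A : Set V).indicator 1) ((A : Set V).indicator 1) =
      ∑ a ∈ A, μ a := by
    simp [toBilin'_diagonal_self, Set.indicator_apply]
  simp only [normalizedIndicator, map_smul, LinearMap.smul_apply, smul_eq_mul, hind]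
  rw [← mul_assoc, ← mul_inv, Real.mul_self_sqrt hA.le, inv_mul_cancel₀ hA.ne']

lemma toBilin'_diagonal_normalizedIndicator_of_disjoint {A B : Finset V} (h : Disjoint A B) :
    toBilin' (diagonal μ) (normalizedIndicator μ A) (normalizedIndicator μ B) = 0 := by
  rw [toBilin'_apply']
  simp only [dotProduct, mulVec_diagonal]
  refine sum_eq_zero fun a _ => ?_
  by_cases ha : a ∈ A
  · simp [normalizedIndicator, disjoint_left.mp h ha]
  · simp [normalizedIndicator, ha]

lemma toBilin'_weightedLapMatrix_indicator (w : V → V → ℝ) (A : Finset V) :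
    toBilin' (weightedLapMatrix w) ((A : Set V).indicator 1) ((A : Set V).indicator 1) =
      ∑ i ∈ A, ∑ j ∈ Aᶜ, w i j := by
  rw [toBilin'_weightedLapMatrix_self, ← sum_subset A.subset_univ]
  · refine sum_congr rfl fun i hi => ?_
    rw [← sum_subset (Aᶜ).subset_univ]
    · exact sum_congr rfl fun j hj => by simp [hi, mem_compl.mp hj]
    · intro j _ hj
      simp_all
  · intro i _ hi
    simp [hi]

lemma toBilin'_weightedLapMatrix_normalizedIndicator (w : V → V → ℝ) {A : Finset V}
    (hA : 0 ≤ ∑ a ∈ A, μ a) :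
    toBilin' (weightedLapMatrix w) (normalizedIndicator μ A) (normalizedIndicator μ A) =
      conductance w μ A := by
  simp only [normalizedIndicator, map_smul, LinearMap.smul_apply, smul_eq_mul,
    toBilin'_weightedLapMatrix_indicator]
  rw [← mul_assoc, ← mul_inv, Real.mul_self_sqrt hA, conductance, inv_mul_eq_div]

end Laplacian

section Cheeger

variable {V : Type*} [Fintype V] [DecidableEq V] {w : V → V → ℝ} {μ : V → ℝ}

theorem card_sub_one_mul_le_sum_conductance {ι : Type*} [Fintype ι] [Nonempty ι]
    (hsymm : ∀ i j, w i j = w j i) (hw : ∀ i j, 0 ≤ w i j) (hμ : ∀ i, 0 < μ i) {τ e : ℝ}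
    (hτ : ∀ i, τ * μ i ≤ ∑ j, w i j)
    (he : ((diagonal μ)⁻¹ * of w).charpoly.roots.countP (e < ·) ≤ 1)
    {A : ι → Finset V} (hA : ∀ i, (A i).Nonempty) (hdisj : Pairwise (Function.onFun Disjoint A)) :
    ((Fintype.card ι : ℝ) - 1) * (τ - e) ≤ ∑ i, conductance w μ (A i) := by
  classical
  have : Nonempty V := (hA (Classical.arbitrary ι)).to_type
  have hmass (i) : 0 < ∑ a ∈ A i, μ a := sum_pos (fun a _ => hμ a) (hA i)
  obtain ⟨φ, hφ⟩ := exists_dual_toBilin'_le hμ (IsSymm.ext fun i j => hsymm j i) he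
  have horth (i j) : toBilin' (diagonal μ) (normalizedIndicator μ (A i))
      (normalizedIndicator μ (A j)) = if i = j then 1 else 0 := by
    split_ifs with hij
    · rw [← hij, toBilin'_diagonal_normalizedIndicator_self (hmass i)]
    · exact toBilin'_diagonal_normalizedIndicator_of_disjoint (hdisj hij)
  simp only [← toBilin'_weightedLapMatrix_normalizedIndicator w (hmass _).le]
  exact card_sub_one_mul_le_sum_apply_self (toBilin'_weightedLapMatrix_self_nonneg hsymm hw)
    (fun x hx => sub_mul_le_toBilin'_weightedLapMatrix hτ (hφ x hx)) horth

lemma le_cheeger {k : ℕ} (hk : k ≤ Fintype.card V) {r : ℝ}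
    (h : ∀ A : Fin k → Finset V, (∀ i, (A i).Nonempty) → Pairwise (Function.onFun Disjoint A) →
      r ≤ ⨆ i, conductance w μ (A i)) :
    r ≤ cheeger k w μ := by
  obtain ⟨f⟩ : Nonempty (Fin k ↪ V) := Function.Embedding.nonempty_of_card_le (by simpa using hk)
  refine le_csInf ⟨_, fun i => {f i}, fun i => singleton_nonempty _, fun i j hij => ?_, rfl⟩ ?_
  · simpa [Function.onFun] using hij
  · rintro _ ⟨A, hA, hdisj, rfl⟩
    exact h A hA hdisj

-- `he` says that `e` is at least the second largest eigenvalue `η₂`, as `max |η₂| |η_n|` is.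
theorem cheeger_lower_bound_general (hsymm : ∀ i j, w i j = w j i) (hw : ∀ i j, 0 ≤ w i j)
    (hμ : ∀ i, 0 < μ i) {e : ℝ}
    (he : ((diagonal μ)⁻¹ * of w).charpoly.roots.countP (e < ·) ≤ 1)
    {k : ℕ} (hk₁ : 1 ≤ k) (hk₂ : k ≤ Fintype.card V) :
    ((⨅ i, (∑ j, w i j) / μ i) - e) * (1 - 1 / (k : ℝ)) ≤ cheeger k w μ := by
  refine le_cheeger hk₂ fun A hA hdisj => ?_
  have : Nonempty (Fin k) := ⟨⟨0, hk₁⟩⟩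
  have hk : (0 : ℝ) < k := by exact_mod_cast hk₁
  set τ := ⨅ i, (∑ j, w i j) / μ i
  have hτ (i) : τ * μ i ≤ ∑ j, w i j :=
    (le_div_iff₀ (hμ i)).mp (ciInf_le (Set.finite_range _).bddBelow i)
  have hsup : ∑ i, conductance w μ (A i) ≤ k * ⨆ i, conductance w μ (A i) := by
    simpa using sum_le_card_nsmul univ _ _ fun i _ =>
      le_ciSup (f := fun i => conductance w μ (A i)) (Set.finite_range _).bddAbove i
  have hsum := card_sub_one_mul_le_sum_conductance hsymm hw hμ hτ he hA hdisj
  rw [Fintype.card_fin] at hsum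
  calc (τ - e) * (1 - 1 / (k : ℝ)) = ((k : ℝ) - 1) * (τ - e) / k := by field_simp
    _ ≤ ⨆ i, conductance w μ (A i) := (div_le_iff₀' hk).mpr (hsum.trans hsup)

end Cheeger

lemma countP_lt_roots_prod_X_sub_C_le_one {n : ℕ} {eta : Fin n → ℝ} (hanti : Antitone eta)
    (hn : 1 < n) {e : ℝ} (he : eta ⟨1, hn⟩ ≤ e) :
    (∏ i, (X - C (eta i))).roots.countP (e < ·) ≤ 1 := by
  have hroots : (∏ i, (X - C (eta i))).roots = univ.val.map eta := by
    rw [← roots_multiset_prod_X_sub_C (univ.val.map eta), Multiset.map_map]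
    rfl
  rw [hroots, Multiset.countP_map]
  suffices hcard : #{i | e < eta i} ≤ 1 from hcard
  refine card_le_one.mpr fun i hi j hj => ?_
  have hzero (i : Fin n) (hi : e < eta i) : i.val = 0 :=
    Nat.lt_one_iff.mp (hanti.reflect_lt (he.trans_lt hi))
  simp only [mem_filter_univ] at hi hj
  exact Fin.ext ((hzero i hi).trans (hzero j hj).symm)

/-- **Spectral lower bound for multi-way Cheeger constants.** For a finite weighted graph
with `|V| ≥ 3` and zero potential, with `η = max {|η₂|, |η_n|}` for the eigenvalues
`η₁ ≥ … ≥ η_n` of the normalized adjacency matrix `𝒜 = M⁻¹ A` and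
`τ_min = min_i d(i)/μ_i`, one has `ρ_k(G) ≥ (τ_min - η)(1 - 1/k)`. -/
theorem cheeger_lower_bound (n : ℕ) (hn : 3 ≤ n)
    (G : SimpleGraph (Fin n)) [DecidableRel G.Adj]
    (w : Fin n → Fin n → ℝ) (hsymm : ∀ i j, w i j = w j i)
    (hpos : ∀ i j, G.Adj i j → 0 < w i j) (hzero : ∀ i j, ¬ G.Adj i j → w i j = 0)
    (μ : Fin n → ℝ) (hμ : ∀ i, 0 < μ i)
    (eta : Fin n → ℝ) (hanti : Antitone eta)
    (hchar : ((Matrix.diagonal μ)⁻¹ * Matrix.of w).charpoly = ∏ i, (X - C (eta i)))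
    (k : ℕ) (hk₁ : 1 ≤ k) (hk₂ : k ≤ n) :
    ((⨅ i, (∑ j, w i j) / μ i) - max |eta ⟨1, by omega⟩| |eta ⟨n - 1, by omega⟩|) *
        (1 - 1 / (k : ℝ)) ≤
      cheeger k w μ := by
  have hw (i j) : 0 ≤ w i j := by
    by_cases h : G.Adj i j
    exacts [(hpos i j h).le, (hzero i j h).ge]
  refine cheeger_lower_bound_general hsymm hw hμ ?_ hk₁ (by simpa using hk₂)
  rw [hchar]
  exact countP_lt_roots_prod_X_sub_C_le_one hanti _ (le_max_of_le_left (le_abs_self _))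
end

section
/- Let G = (V,E,w,μ) be a finite weighted graph with zero potential, let η = max{|η_2|, |η_n|} where η_1 ≥ … ≥ η_n are the eigenvalues of the normalized adjacency matrix 𝒜 = M^{−1}A, and let τ_min = min_{i∈V} d(i)/μ_i. Then for every nonempty proper subset A_1 ⊂ V, writing α = μ(A_1)/μ(V) with μ(S) = Σ_{x∈S} μ_x, the weighted edge boundary satisfies E(A_1, V∖A_1) := Σ_{x∈A_1} Σ_{y∉A_1, {x,y}∈E} w_{xy} ≥ (τ_min − η) α (1 − α) μ(V). -/
open BigOperators Matrix Polynomial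

/-!
Let `M = diagonal μ`. If at most one eigenvalue of `M⁻¹ W` exceeds `θ`, then
`f ⬝ᵥ W *ᵥ f ≤ θ ∑ μ i * f i ^ 2` for all `f` orthogonal to a single vector `g`. If moreover the
degrees are at least `τ * μ i`, then the Dirichlet energy of such `f` is at least
`(τ - θ) ∑ μ i * f i ^ 2`. Constants need not be eigenvectors, so a function of weighted mean zero
need not be orthogonal to `g`. However, if `θ < τ`, then `g` is not orthogonal to the constants,
which have energy zero, so every `f` becomes orthogonal to `g` after subtracting some constant `c`.
This does not change the energy, and `∑ μ i * (f i - c) ^ 2` is smallest when `c` is the weighted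
mean; hence the energy is at least `τ - θ` times the variance. For the indicator of a set `A`, the
energy is the weight of the edge boundary and the variance is `α (1 - α) μ(V)`.
-/

lemma countP_lt_roots_prod_X_sub_C_le {R : Type*} [CommRing R] [IsDomain R] [LinearOrder R]
    {n : ℕ} {eta : Fin n → R} (hanti : Antitone eta) {k : Fin n} {θ : R} (hk : eta k ≤ θ) :
    (∏ i, (X - C (eta i))).roots.countP (θ < ·) ≤ (k : ℕ) := by
  have hroots : (∏ i, (X - C (eta i))).roots = Finset.univ.val.map eta := by
    simp [roots_prod, Finset.prod_ne_zero_iff, X_sub_C_ne_zero]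
  rw [hroots, Multiset.countP_map, ← Fin.card_Iio k]
  refine Finset.card_le_card (s := {i | θ < eta i}) fun i hi => ?_
  simpa using hanti.reflect_lt (hk.trans_lt (by simpa using hi))

section Rayleigh

open scoped InnerProductSpace

lemma re_inner_apply_self_le_of_forall_lt_inner_eq_zero {𝕜 E ι : Type*} [RCLike 𝕜]
    [NormedAddCommGroup E] [InnerProductSpace 𝕜 E] [Fintype ι] (b : OrthonormalBasis ι 𝕜 E)
    {T : E →ₗ[𝕜] E} {eig : ι → ℝ} (hT : ∀ i, T (b i) = (eig i : 𝕜) • b i) {θ : ℝ} {v : E}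
    (hv : ∀ i, θ < eig i → ⟪b i, v⟫_𝕜 = 0) :
    RCLike.re ⟪v, T v⟫_𝕜 ≤ θ * ‖v‖ ^ 2 := by
  have hTv : T v = ∑ i, (⟪b i, v⟫_𝕜 * (eig i : 𝕜)) • b i := by
    conv_lhs => rw [← b.sum_repr' v]
    simp only [map_sum, map_smul, hT, smul_smul]
  have hterm (i : ι) : ⟪v, (⟪b i, v⟫_𝕜 * (eig i : 𝕜)) • b i⟫_𝕜
      = ((eig i * ‖⟪b i, v⟫_𝕜‖ ^ 2 : ℝ) : 𝕜) := by
    rw [inner_smul_right, ← inner_conj_symm v, mul_right_comm, RCLike.mul_conj]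
    push_cast
    ring
  calc RCLike.re ⟪v, T v⟫_𝕜 = ∑ i, eig i * ‖⟪b i, v⟫_𝕜‖ ^ 2 := by
        simp only [hTv, inner_sum, hterm, map_sum, RCLike.ofReal_re]
    _ ≤ ∑ i, θ * ‖⟪b i, v⟫_𝕜‖ ^ 2 := by
        refine Finset.sum_le_sum fun i _ => ?_
        rcases le_or_gt (eig i) θ with hi | hi
        · gcongr
        · simp [hv i hi]
    _ = θ * ‖v‖ ^ 2 := by rw [← Finset.mul_sum, b.sum_sq_norm_inner_right]

variable {V : Type*} [Fintype V] [DecidableEq V] {θ : ℝ}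

lemma exists_forall_orthogonal_dotProduct_mulVec_le {S : Matrix V V ℝ}
    (hS : S.IsHermitian) (hθ : S.charpoly.roots.countP (θ < ·) ≤ 1) :
    ∃ g : V → ℝ, ∀ v, g ⬝ᵥ v = 0 → v ⬝ᵥ S *ᵥ v ≤ θ * (v ⬝ᵥ v) := by
  cases isEmpty_or_nonempty V
  · simp [dotProduct]
  obtain ⟨k, hk⟩ : ∃ k, ({i | θ < hS.eigenvalues i} : Finset V) ⊆ {k} := by
    rw [← Finset.card_le_one_iff_subset_singleton]
    simpa [hS.roots_charpoly_eq_eigenvalues, Multiset.countP_map, Finset.card_def] using hθ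
  refine ⟨hS.eigenvectorBasis k, fun v hv => ?_⟩
  have hT (i : V) : S.toEuclideanLin (hS.eigenvectorBasis i)
      = hS.eigenvalues i • hS.eigenvectorBasis i := by
    refine WithLp.ofLp_injective 2 ?_
    simpa using hS.mulVec_eigenvectorBasis i
  have horth (i : V) (hi : θ < hS.eigenvalues i) :
      ⟪hS.eigenvectorBasis i, WithLp.toLp 2 v⟫_ℝ = 0 := by
    obtain rfl : i = k := by simpa using hk (by simpa using hi)
    simpa [EuclideanSpace.inner_eq_star_dotProduct, dotProduct_comm] using hv
  have hnorm : ‖WithLp.toLp 2 v‖ ^ 2 = v ⬝ᵥ v := by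
    simp [EuclideanSpace.real_norm_sq_eq, dotProduct, ← sq]
  simpa [hnorm, EuclideanSpace.inner_eq_star_dotProduct, dotProduct_comm] using
    re_inner_apply_self_le_of_forall_lt_inner_eq_zero hS.eigenvectorBasis hT horth

lemma exists_forall_orthogonal_dotProduct_mulVec_le_of_posDef
    {M W : Matrix V V ℝ} (hM : M.PosDef) (hW : W.IsHermitian)
    (hθ : (M⁻¹ * W).charpoly.roots.countP (θ < ·) ≤ 1) :
    ∃ g : V → ℝ, ∀ v, g ⬝ᵥ v = 0 → v ⬝ᵥ W *ᵥ v ≤ θ * (v ⬝ᵥ M *ᵥ v) := by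
  open scoped MatrixOrder Matrix.Norms.L2Operator in
  obtain ⟨R, hR, rfl⟩ :=
    CStarAlgebra.isStrictlyPositive_iff_eq_star_mul_self.mp hM.isStrictlyPositive
  rw [star_eq_conjTranspose, conjTranspose_eq_transpose_of_trivial] at hθ ⊢
  set S := (R⁻¹)ᵀ * W * R⁻¹ with hS_def
  have hRSR : Rᵀ * S * R = W :=
    calc Rᵀ * S * R = (R⁻¹ * R)ᵀ * W * (R⁻¹ * R) := by
          simp only [hS_def, transpose_mul, Matrix.mul_assoc]
      _ = W := by
          rw [nonsing_inv_mul _ (R.isUnit_iff_isUnit_det.1 hR), transpose_one, Matrix.one_mul,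
            Matrix.mul_one]
  have hS : S.IsHermitian := by
    simpa [S] using isHermitian_conjTranspose_mul_mul R⁻¹ hW
  have hchar : ((Rᵀ * R)⁻¹ * W).charpoly = S.charpoly := by
    rw [hS_def, charpoly_mul_comm _ R⁻¹, ← Matrix.mul_assoc, Matrix.mul_inv_rev,
      transpose_nonsing_inv]
  obtain ⟨g, hg⟩ := exists_forall_orthogonal_dotProduct_mulVec_le hS (hchar ▸ hθ)
  refine ⟨g ᵥ* R, fun v hv => ?_⟩
  have h := hg (R *ᵥ v) (by rwa [dotProduct_mulVec])
  simpa only [← hRSR, ← mulVec_mulVec, dotProduct_mulVec v, vecMul_transpose] using h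

end Rayleigh

section Variance

lemma sum_mul_sub_sq_eq_add {ι : Type*} {s : Finset ι} {μ f : ι → ℝ} {m : ℝ}
    (hm : ∑ i ∈ s, μ i * (f i - m) = 0) (c : ℝ) :
    ∑ i ∈ s, μ i * (f i - c) ^ 2
      = ∑ i ∈ s, μ i * (f i - m) ^ 2 + (m - c) ^ 2 * ∑ i ∈ s, μ i := by
  have hterm (i : ι) : μ i * (f i - c) ^ 2
      = μ i * (f i - m) ^ 2 + 2 * (m - c) * (μ i * (f i - m)) + (m - c) ^ 2 * μ i := by ring
  simp only [hterm, Finset.sum_add_distrib, ← Finset.mul_sum, hm, mul_zero, add_zero]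

variable {V : Type*} [Fintype V] [DecidableEq V] {μ : V → ℝ} {A : Finset V} {α : ℝ}

lemma sum_mul_indicator_sub_eq_zero (hα : α * ∑ i, μ i = ∑ i ∈ A, μ i) :
    ∑ i, μ i * ((if i ∈ A then 1 else 0) - α) = 0 := by
  simp [mul_sub, ← Finset.sum_mul, ← hα, mul_comm α]

lemma sum_mul_indicator_sub_sq (hα : α * ∑ i, μ i = ∑ i ∈ A, μ i) :
    ∑ i, μ i * ((if i ∈ A then 1 else 0) - α) ^ 2 = α * (1 - α) * ∑ i, μ i := by
  have hmoment : ∑ i, μ i * ((if i ∈ A then 1 else 0) - (0 : ℝ)) ^ 2 = α * ∑ i, μ i := by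
    simp [hα]
  rw [sum_mul_sub_sq_eq_add (sum_mul_indicator_sub_eq_zero hα)] at hmoment
  linarith

end Variance

section DirichletEnergy

variable {V : Type*} [Fintype V] {W : Matrix V V ℝ}

/-- The Dirichlet energy `½ ∑ᵢⱼ Wᵢⱼ (fᵢ - fⱼ)²` of a function on the vertices of a weighted graph.
The factor `½` compensates for each edge being summed in both directions. -/
noncomputable def dirichletEnergy (W : Matrix V V ℝ) (f : V → ℝ) : ℝ :=
  (∑ i, ∑ j, W i j * (f i - f j) ^ 2) / 2

lemma dirichletEnergy_nonneg (hW : Pairwise fun i j => 0 ≤ W i j) (f : V → ℝ) :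
    0 ≤ dirichletEnergy W f := by
  refine div_nonneg (Finset.sum_nonneg fun i _ => Finset.sum_nonneg fun j _ => ?_) zero_le_two
  rcases eq_or_ne i j with rfl | hij
  · simp
  · exact mul_nonneg (hW hij) (sq_nonneg _)

lemma dirichletEnergy_sub_const (W : Matrix V V ℝ) (f : V → ℝ) (c : ℝ) :
    dirichletEnergy W (fun i => f i - c) = dirichletEnergy W f := by
  simp only [dirichletEnergy, sub_sub_sub_cancel_right]

lemma dirichletEnergy_eq_sum_sub_dotProduct_mulVec (hW : W.IsSymm) (f : V → ℝ) :
    dirichletEnergy W f = ∑ i, (∑ j, W i j) * f i ^ 2 - f ⬝ᵥ W *ᵥ f := by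
  have hswap : ∑ i, ∑ j, W i j * f j ^ 2 = ∑ i, ∑ j, W i j * f i ^ 2 := by
    rw [Finset.sum_comm]
    simp only [hW.apply]
  have hterm (i j : V) : W i j * (f i - f j) ^ 2
      = W i j * f i ^ 2 + W i j * f j ^ 2 - 2 * (f i * (W i j * f j)) := by ring
  simp only [dirichletEnergy, hterm, Finset.sum_sub_distrib, Finset.sum_add_distrib, hswap,
    Finset.sum_mul, dotProduct, mulVec, ← Finset.mul_sum]
  ring

lemma dirichletEnergy_indicator [DecidableEq V] (hW : W.IsSymm) (A : Finset V) :
    dirichletEnergy W (fun i => if i ∈ A then 1 else 0) = ∑ x ∈ A, ∑ y ∈ Aᶜ, W x y := by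
  have hswap : ∑ x ∈ Aᶜ, ∑ y ∈ A, W x y = ∑ x ∈ A, ∑ y ∈ Aᶜ, W x y :=
    Finset.sum_comm.trans (by simp only [hW.apply])
  have hterm (i j : V) : W i j * ((if i ∈ A then 1 else 0) - (if j ∈ A then 1 else 0)) ^ 2
      = (if i ∈ A then if j ∈ Aᶜ then W i j else 0 else 0)
        + (if i ∈ Aᶜ then if j ∈ A then W i j else 0 else 0) := by
    by_cases hi : i ∈ A <;> by_cases hj : j ∈ A <;> simp [hi, hj]
  simp only [dirichletEnergy, hterm, Finset.sum_add_distrib, Finset.sum_ite_irrel,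
    Finset.sum_const_zero, Finset.sum_ite_mem, Finset.univ_inter, hswap, add_self_div_two]

lemma exists_dotProduct_sub_const_eq_zero {g : V → ℝ} (hg : ∑ i, g i ≠ 0) (f : V → ℝ) :
    ∃ c, g ⬝ᵥ (fun i => f i - c) = 0 := by
  refine ⟨(g ⬝ᵥ f) / ∑ i, g i, ?_⟩
  simp only [dotProduct, mul_sub, Finset.sum_sub_distrib, ← Finset.sum_mul,
    mul_div_cancel₀ _ hg, sub_self]

variable [DecidableEq V] {μ : V → ℝ} {τ θ : ℝ}

lemma exists_forall_orthogonal_mul_sum_sq_le_dirichletEnergy (hW : W.IsSymm) (hμ : ∀ i, 0 < μ i)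
    (hτ : ∀ i, τ * μ i ≤ ∑ j, W i j)
    (hθ : ((diagonal μ)⁻¹ * W).charpoly.roots.countP (θ < ·) ≤ 1) :
    ∃ g : V → ℝ, ∀ f, g ⬝ᵥ f = 0 → (τ - θ) * ∑ i, μ i * f i ^ 2 ≤ dirichletEnergy W f := by
  obtain ⟨g, hg⟩ := exists_forall_orthogonal_dotProduct_mulVec_le_of_posDef
    (.diagonal hμ) (by simpa using hW) hθ
  refine ⟨g, fun f hf => ?_⟩
  have hdeg : τ * ∑ i, μ i * f i ^ 2 ≤ ∑ i, (∑ j, W i j) * f i ^ 2 := by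
    rw [Finset.mul_sum]
    refine Finset.sum_le_sum fun i _ => ?_
    rw [← mul_assoc]
    exact mul_le_mul_of_nonneg_right (hτ i) (sq_nonneg _)
  have hmass : f ⬝ᵥ diagonal μ *ᵥ f = ∑ i, μ i * f i ^ 2 := by
    simp only [dotProduct, mulVec_diagonal]
    exact Finset.sum_congr rfl fun i _ => by ring
  rw [dirichletEnergy_eq_sum_sub_dotProduct_mulVec hW]
  linarith [hmass ▸ hg f hf]

theorem poincare_inequality (hW : W.IsSymm) (hW₀ : Pairwise fun i j => 0 ≤ W i j)
    (hμ : ∀ i, 0 < μ i) (hτ : ∀ i, τ * μ i ≤ ∑ j, W i j)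
    (hθ : ((diagonal μ)⁻¹ * W).charpoly.roots.countP (θ < ·) ≤ 1)
    {f : V → ℝ} {m : ℝ} (hm : ∑ i, μ i * (f i - m) = 0) :
    (τ - θ) * ∑ i, μ i * (f i - m) ^ 2 ≤ dirichletEnergy W f := by
  have hμ₀ (i : V) : 0 ≤ μ i := (hμ i).le
  cases isEmpty_or_nonempty V
  · simp [dirichletEnergy]
  rcases le_or_gt (τ - θ) 0 with hgap | hgap
  · refine (mul_nonpos_of_nonpos_of_nonneg hgap ?_).trans (dirichletEnergy_nonneg hW₀ f)
    exact Finset.sum_nonneg fun i _ => mul_nonneg (hμ₀ i) (sq_nonneg _)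
  obtain ⟨g, hg⟩ := exists_forall_orthogonal_mul_sum_sq_le_dirichletEnergy hW hμ hτ hθ
  have hg_sum : ∑ i, g i ≠ 0 := by
    intro hg_zero
    have hmass : 0 < ∑ i, μ i := Finset.sum_pos (fun i _ => hμ i) Finset.univ_nonempty
    have hone : (τ - θ) * ∑ i, μ i ≤ 0 := by
      simpa [dirichletEnergy] using hg (fun _ => 1) (by simpa [dotProduct] using hg_zero)
    exact (mul_pos hgap hmass).not_ge hone
  obtain ⟨c, hc⟩ := exists_dotProduct_sub_const_eq_zero hg_sum f
  calc (τ - θ) * ∑ i, μ i * (f i - m) ^ 2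
      ≤ (τ - θ) * ∑ i, μ i * (f i - c) ^ 2 := by
        rw [sum_mul_sub_sq_eq_add hm c]
        gcongr
        exact le_add_of_nonneg_right (mul_nonneg (sq_nonneg _) (Finset.sum_nonneg fun i _ => hμ₀ i))
    _ ≤ dirichletEnergy W (fun i => f i - c) := hg _ hc
    _ = dirichletEnergy W f := dirichletEnergy_sub_const W f c

theorem boundary_lower_bound_general [Nonempty V] (hW : W.IsSymm)
    (hW₀ : Pairwise fun i j => 0 ≤ W i j) (hμ : ∀ i, 0 < μ i)
    (hθ : ((diagonal μ)⁻¹ * W).charpoly.roots.countP (θ < ·) ≤ 1)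
    (A : Finset V) {α : ℝ} (hα : α = (∑ i ∈ A, μ i) / ∑ i, μ i) :
    ((⨅ i, (∑ j, W i j) / μ i) - θ) * α * (1 - α) * ∑ i, μ i ≤ ∑ x ∈ A, ∑ y ∈ Aᶜ, W x y := by
  have hτ (i : V) : (⨅ i, (∑ j, W i j) / μ i) * μ i ≤ ∑ j, W i j :=
    (le_div_iff₀ (hμ i)).1 (ciInf_le (Set.finite_range _).bddBelow i)
  have hα' : α * ∑ i, μ i = ∑ i ∈ A, μ i := by
    rw [hα, div_mul_cancel₀ _ (Finset.sum_pos (fun i _ => hμ i) Finset.univ_nonempty).ne']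
  have h := poincare_inequality hW hW₀ hμ hτ hθ (sum_mul_indicator_sub_eq_zero hα')
  rw [sum_mul_indicator_sub_sq hα', dirichletEnergy_indicator hW] at h
  linarith

end DirichletEnergy

/-- **Expander-mixing type lower bound for the weighted edge boundary.** For a finite weighted
graph with zero potential, `η = max {|η₂|, |η_n|}` for the eigenvalues `η₁ ≥ … ≥ η_n` of the
normalized adjacency matrix `𝒜 = M⁻¹ A` and `τ_min = min_i d(i)/μ_i`, every nonempty proper
subset `A₁ ⊂ V` with `α = μ(A₁)/μ(V)` satisfies
`E(A₁, V∖A₁) ≥ (τ_min - η) α (1 - α) μ(V)`. -/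
theorem boundary_lower_bound (n : ℕ) (hn : 2 ≤ n)
    (G : SimpleGraph (Fin n)) [DecidableRel G.Adj]
    (w : Fin n → Fin n → ℝ) (hsymm : ∀ i j, w i j = w j i)
    (hpos : ∀ i j, G.Adj i j → 0 < w i j) (hzero : ∀ i j, ¬ G.Adj i j → w i j = 0)
    (μ : Fin n → ℝ) (hμ : ∀ i, 0 < μ i)
    (eta : Fin n → ℝ) (hanti : Antitone eta)
    (hchar : ((Matrix.diagonal μ)⁻¹ * Matrix.of w).charpoly = ∏ i, (X - C (eta i)))
    (A₁ : Finset (Fin n)) (hA₁ : A₁.Nonempty) (hA₁' : A₁ ≠ Finset.univ)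
    (α : ℝ) (hα : α = (∑ i ∈ A₁, μ i) / (∑ i, μ i)) :
    ∑ x ∈ A₁, ∑ y ∈ A₁ᶜ, w x y ≥
      ((⨅ i, (∑ j, w i j) / μ i) - max |eta ⟨1, by omega⟩| |eta ⟨n - 1, by omega⟩|) *
        α * (1 - α) * (∑ i, μ i) := by
  have : Nonempty (Fin n) := ⟨⟨0, by omega⟩⟩
  have hw : Pairwise fun i j => 0 ≤ w i j := fun i j _ =>
    if hij : G.Adj i j then (hpos i j hij).le else (hzero i j hij).ge
  have hθ := countP_lt_roots_prod_X_sub_C_le hanti (k := ⟨1, by omega⟩)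
    ((le_abs_self _).trans (le_max_left _ |eta ⟨n - 1, by omega⟩|))
  exact boundary_lower_bound_general (.ext fun i j => hsymm j i) hw hμ (hchar ▸ hθ) A₁ hα
end
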